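/- Let 0 < α, β < 1/2 be constants, K = n, M = ⌈n^α⌉, and r = ⌈n^β⌉, and assume α + 2β ≥ 1 + 2·log log n/log n for all sufficiently large n. Then, under the Uniform popularity distribution, Strategy II with radius r achieves maximum load L = Θ(log log n) with high probability, and its communication cost is C = Θ(r) = Θ(n^β). -/

import Mathlib

open scoped Classical BigOperators
open Filter

/-- Nodes of the `m × m` torus grid (a `√n × √n` grid with wrap-around, `n = m²`). -/
abbrev Node (m : ℕ) := Fin m × Fin m

/-- Wrap-around distance between two coordinates in `Fin m`. -/
def cdist {m : ℕ} (a b : Fin m) : ℕ :=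
  min ((a.val + m - b.val) % m) ((b.val + m - a.val) % m)

/-- Graph (shortest-path) distance on the torus grid. -/
def torusDist {m : ℕ} (u v : Node m) : ℕ := cdist u.1 v.1 + cdist u.2 v.2

/-- A cache placement: each of the `m²` nodes fills `M` cache slots with files from a
library of `K` files.  Under the Uniform popularity distribution the random placement
is uniform over all such functions (each slot i.i.d. uniform on the `K` files). -/
abbrev Placement (m M K : ℕ) := Node m → Fin M → Fin K

/-- Node `u` has cached file `j`. -/
def cached {m M K : ℕ} (ω : Placement m M K) (u : Node m) (j : Fin K) : Prop :=
  ∃ i, ω u i = j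

/-- Probability of an event under the uniform measure on a finite type. -/
noncomputable def unifProb {Ω : Type*} [Fintype Ω] (E : Set Ω) : ℝ :=
  ((Finset.univ.filter (fun ω => ω ∈ E)).card : ℝ) / (Fintype.card Ω : ℝ)

/-- The set of candidate servers for a request at `u` for file `j` with proximity
radius `r`: the nodes within graph distance `r` of `u` that cached file `j`. -/
noncomputable def candSet {m M K : ℕ} (ω : Placement m M K) (u : Node m) (j : Fin K)
    (r : ℕ) : Finset (Node m) :=
  Finset.univ.filter fun v => cached ω v j ∧ torusDist u v ≤ r

/-- The load vector after the first `t` balls (requests) have been processed: ball `s`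
is placed on the lesser loaded of its two candidates `(cand s).1, (cand s).2`, ties
broken by the random bit `tb s`. -/
def loadsUpTo {V : Type*} [DecidableEq V] {n' : ℕ} (cand : Fin n' → V × V)
    (tb : Fin n' → Bool) : ℕ → V → ℕ
  | 0 => fun _ => 0
  | t + 1 => fun v =>
      if h : t < n' then
        let L := loadsUpTo cand tb t
        let c := cand ⟨t, h⟩
        let w := if L c.1 < L c.2 then c.1
          else if L c.2 < L c.1 then c.2
          else if tb ⟨t, h⟩ then c.1 else c.2
        if v = w then L v + 1 else L v
      else loadsUpTo cand tb t v

/-- The node that serves request `t`. -/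
def chosenAt {V : Type*} [DecidableEq V] {n' : ℕ} (cand : Fin n' → V × V)
    (tb : Fin n' → Bool) (t : Fin n') : V :=
  let L := loadsUpTo cand tb t.val
  let c := cand t
  if L c.1 < L c.2 then c.1
  else if L c.2 < L c.1 then c.2
  else if tb t then c.1 else c.2

/-- The maximum load after all `n'` requests. -/
noncomputable def maxLoadII {V : Type*} [DecidableEq V] [Fintype V] {n' : ℕ}
    (cand : Fin n' → V × V) (tb : Fin n' → Bool) : ℕ :=
  Finset.univ.sup (loadsUpTo cand tb n')

/-- Sample space of Strategy II: a placement, the `n'` requests (origin, file), the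
two candidate choices of each request and the tie-breaking bits. -/
abbrev SampleII (m M K n' : ℕ) :=
  Placement m M K × (Fin n' → Node m × Fin K) × (Fin n' → Node m × Node m) ×
    (Fin n' → Bool)

/-- Probability weight of a sample point of Strategy II under the Uniform popularity
distribution: the placement is uniform, each request has a uniform origin and a
uniform file, the two candidates of request `t` are drawn uniformly from the caches of
the requested file within distance `r` of the origin, and the tie-breaking bits are
uniform. -/
noncomputable def weightII (m M K r n' : ℕ) (x : SampleII m M K n') : ℝ :=
  (1 / (Fintype.card (Placement m M K) : ℝ)) *
    (1 / ((Fintype.card (Node m × Fin K) : ℝ)) ^ n') * (1 / 2 ^ n') *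
    ∏ t : Fin n',
      if (x.2.2.1 t).1 ∈ candSet x.1 (x.2.1 t).1 (x.2.1 t).2 r ∧
          (x.2.2.1 t).2 ∈ candSet x.1 (x.2.1 t).1 (x.2.1 t).2 r then
        1 / ((candSet x.1 (x.2.1 t).1 (x.2.1 t).2 r).card : ℝ) ^ 2
      else 0

/-- Probability of an event for Strategy II. -/
noncomputable def probII (m M K r n' : ℕ) (E : Set (SampleII m M K n')) : ℝ :=
  ∑ x ∈ Finset.univ.filter (fun x => x ∈ E), weightII m M K r n' x

/-- Communication cost of Strategy II: the expected average graph distance between a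
request's origin and the node serving it. -/
noncomputable def commCostII (m M K r n' : ℕ) : ℝ :=
  ∑ x : SampleII m M K n',
    weightII m M K r n' x *
      ((∑ t : Fin n', (torusDist (x.2.1 t).1 (chosenAt x.2.2.1 x.2.2.2 t) : ℝ)) /
        (n' : ℝ))

/-- Cache size `M = ⌈n^α⌉`. -/
noncomputable def Mf (α : ℝ) (n : ℕ) : ℕ := ⌈(n : ℝ) ^ α⌉₊

/-- Proximity radius `r = ⌈n^β⌉`. -/
noncomputable def rf (β : ℝ) (n : ℕ) : ℕ := ⌈(n : ℝ) ^ β⌉₊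


/-! ### Sequential expectations -/

/-- Iterated expectation over `k` further independent steps of law `w`,
starting from a history `h` (newest step first). -/
noncomputable def EX {X : Type*} [Fintype X] (w : X → ℝ) :
    ℕ → (List X → ℝ) → List X → ℝ
  | 0, F, h => F h
  | k + 1, F, h => ∑ x, w x * EX w k F (x :: h)

section EXsec
variable {X : Type*} [Fintype X] (w : X → ℝ)

lemma EX_mono (hw : ∀ x, 0 ≤ w x) {F G : List X → ℝ} (hFG : ∀ h, F h ≤ G h) (k : ℕ)
    (h : List X) : EX w k F h ≤ EX w k G h := by
  induction k generalizing h with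
  | zero => exact hFG h
  | succ k ih =>
    simp only [EX]
    exact Finset.sum_le_sum fun x _ => mul_le_mul_of_nonneg_left (ih _) (hw x)

lemma EX_add (F G : List X → ℝ) (k : ℕ) (h : List X) :
    EX w k (fun h => F h + G h) h = EX w k F h + EX w k G h := by
  induction k generalizing h with
  | zero => rfl
  | succ k ih => simp only [EX, ih, mul_add, Finset.sum_add_distrib]

lemma EX_smul (c : ℝ) (F : List X → ℝ) (k : ℕ) (h : List X) :
    EX w k (fun h => c * F h) h = c * EX w k F h := by
  induction k generalizing h with
  | zero => rfl
  | succ k ih =>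
    simp only [EX, ih, Finset.mul_sum]
    exact Finset.sum_congr rfl fun x _ => by ring

lemma EX_sum {ι : Type*} (s : Finset ι) (F : ι → List X → ℝ) (k : ℕ) (h : List X) :
    EX w k (fun h => ∑ i ∈ s, F i h) h = ∑ i ∈ s, EX w k (F i) h := by
  induction k generalizing h with
  | zero => rfl
  | succ k ih =>
    simp only [EX, ih, Finset.mul_sum]
    exact Finset.sum_comm

lemma EX_const (hw1 : ∑ x, w x = 1) (c : ℝ) (k : ℕ) (h : List X) :
    EX w k (fun _ => c) h = c := by
  induction k generalizing h with
  | zero => rfl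
  | succ k ih => simp only [EX, ih, ← Finset.sum_mul, hw1, one_mul]

lemma EX_comp (a b : ℕ) (F : List X → ℝ) (h : List X) :
    EX w (a + b) F h = EX w a (EX w b F) h := by
  induction a generalizing h with
  | zero => simp [EX]
  | succ a ih =>
    rw [Nat.succ_add]
    simp only [EX, ih]

lemma EX_super (hw : ∀ x, 0 ≤ w x) (Inv : List X → Prop) (M : List X → ℝ) (c : ℝ)
    (hc : 0 ≤ c) (hInv : ∀ h x, Inv h → Inv (x :: h))
    (hM : ∀ h, Inv h → ∑ x, w x * M (x :: h) ≤ c * M h) (k : ℕ) (h : List X)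
    (hh : Inv h) : EX w k M h ≤ c ^ k * M h := by
  induction k generalizing h with
  | zero => simp [EX]
  | succ k ih =>
    simp only [EX]
    calc ∑ x, w x * EX w k M (x :: h) ≤ ∑ x, w x * (c ^ k * M (x :: h)) :=
          Finset.sum_le_sum fun x _ =>
            mul_le_mul_of_nonneg_left (ih _ (hInv _ _ hh)) (hw x)
      _ = c ^ k * ∑ x, w x * M (x :: h) := by
          rw [Finset.mul_sum]; exact Finset.sum_congr rfl fun x _ => by ring
      _ ≤ c ^ k * (c * M h) := mul_le_mul_of_nonneg_left (hM h hh) (by positivity)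
      _ = c ^ (k + 1) * M h := by ring

lemma EX_eq_sum (F : List X → ℝ) (k : ℕ) (h : List X) :
    EX w k F h =
      ∑ x : Fin k → X, (∏ t, w (x t)) * F ((List.ofFn x).reverse ++ h) := by
  induction k generalizing h with
  | zero => simp [EX]
  | succ k ih =>
    simp only [EX, ih]
    rw [← (Fin.consEquiv (fun _ : Fin (k + 1) => X)).sum_comp, Fintype.sum_prod_type]
    refine Finset.sum_congr rfl fun x _ => ?_
    rw [Finset.mul_sum]
    refine Finset.sum_congr rfl fun y _ => ?_
    simp [Fin.consEquiv, Fin.prod_univ_succ, List.ofFn_succ, mul_assoc]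

/-- Upper tail bound for a counter. -/
lemma EX_upper (hw : ∀ x, 0 ≤ w x) (hw1 : ∑ x, w x = 1) (G : List X → Prop)
    (Z : List X → ℕ) (p θ κ : ℝ) (hθ : 0 ≤ θ) (hG : ∀ h x, G (x :: h) → G h)
    (hZ : ∀ h x, Z (x :: h) ≤ Z h + 1) (hZ0 : Z [] = 0)
    (hp : ∀ h, G h → ∑ x, w x * (if Z h < Z (x :: h) then 1 else 0) ≤ p) (k : ℕ) :
    EX w k (fun h => if G h ∧ κ ≤ Z h then 1 else 0) [] ≤
      Real.exp ((Real.exp θ - 1) * p * k - θ * κ) := by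
  set M : List X → ℝ := fun h => if G h then Real.exp (θ * Z h) else 0 with hMdef
  have he : 0 ≤ Real.exp θ - 1 := by
    have := Real.one_le_exp hθ
    linarith
  have hM : ∀ h, True → ∑ x, w x * M (x :: h) ≤ Real.exp ((Real.exp θ - 1) * p) * M h := by
    intro h _
    by_cases hg : G h
    · have h1 : ∀ x, M (x :: h) ≤ Real.exp (θ * Z h) *
          (1 + (Real.exp θ - 1) * (if Z h < Z (x :: h) then 1 else 0)) := by
        intro x
        have h2 : M (x :: h) ≤ Real.exp (θ * Z (x :: h)) := by
          simp only [hMdef]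
          split_ifs
          · exact le_rfl
          · positivity
        refine h2.trans ?_
        split_ifs with h3
        · have h4 : Z (x :: h) = Z h + 1 := le_antisymm (hZ h x) h3
          rw [h4]
          push_cast
          rw [mul_add, Real.exp_add]
          apply le_of_eq
          ring_nf
        · have : (Z (x :: h) : ℝ) ≤ Z h := by exact_mod_cast not_lt.mp h3
          simp only [mul_zero, add_zero, mul_one]
          exact Real.exp_le_exp.mpr (mul_le_mul_of_nonneg_left this hθ)
      calc ∑ x, w x * M (x :: h) ≤ ∑ x, w x * (Real.exp (θ * Z h) *
          (1 + (Real.exp θ - 1) * (if Z h < Z (x :: h) then 1 else 0))) :=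
            Finset.sum_le_sum fun x _ => mul_le_mul_of_nonneg_left (h1 x) (hw x)
        _ = Real.exp (θ * Z h) * (∑ x, w x + (Real.exp θ - 1) *
            ∑ x, w x * (if Z h < Z (x :: h) then 1 else 0)) := by
            rw [mul_add, Finset.mul_sum, Finset.mul_sum, Finset.mul_sum,
              ← Finset.sum_add_distrib]
            exact Finset.sum_congr rfl fun x _ => by ring
        _ ≤ Real.exp (θ * Z h) * (1 + (Real.exp θ - 1) * p) := by
            rw [hw1]
            gcongr
            exact hp h hg
        _ ≤ Real.exp (θ * Z h) * Real.exp ((Real.exp θ - 1) * p) := by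
            gcongr
            rw [add_comm]
            exact Real.add_one_le_exp _
        _ = _ := by simp [hMdef, hg, mul_comm]
    · have : ∀ x, M (x :: h) = 0 := fun x => by
        simp only [hMdef]
        rw [if_neg]
        exact fun h' => hg (hG h x h')
      have h0 : M h = 0 := by simp [hMdef, hg]
      simp only [this, h0, mul_zero, Finset.sum_const_zero, le_refl]
  have h5 := EX_super w hw (fun _ => True) M _ (Real.exp_pos _).le (fun _ _ _ => trivial)
    hM k [] trivial
  have h6 : M [] ≤ 1 := by
    simp only [hMdef, hZ0]
    split_ifs <;> simp
  calc EX w k (fun h => if G h ∧ κ ≤ Z h then 1 else 0) []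
      ≤ EX w k (fun h => Real.exp (-(θ * κ)) * M h) [] := by
        apply EX_mono w hw
        intro h
        split_ifs with h7
        · simp only [hMdef, if_pos h7.1, ← Real.exp_add]
          apply Real.one_le_exp
          have := mul_le_mul_of_nonneg_left h7.2 hθ
          linarith
        · simp only [hMdef]
          split_ifs <;> positivity
    _ = Real.exp (-(θ * κ)) * EX w k M [] := EX_smul _ _ _ _ _
    _ ≤ Real.exp (-(θ * κ)) * (Real.exp ((Real.exp θ - 1) * p) ^ k * 1) := by
        gcongr
        exact h5.trans (mul_le_mul_of_nonneg_left h6 (by positivity))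
    _ = _ := by
        rw [← Real.exp_nat_mul, mul_one, ← Real.exp_add]
        congr 1
        ring

/-- Lower tail bound for a counter. -/
lemma EX_lower (hw : ∀ x, 0 ≤ w x) (hw1 : ∑ x, w x = 1) (Inv : List X → Prop)
    (Z : List X → ℕ) (p κ : ℝ) (hInv : ∀ h x, Inv h → Inv (x :: h))
    (hZ : ∀ h x, Z h ≤ Z (x :: h))
    (hp : ∀ h, Inv h → (Z h : ℝ) < κ →
      p ≤ ∑ x, w x * (if Z h < Z (x :: h) then 1 else 0)) (k : ℕ)
    (h : List X) (hh : Inv h) :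
    EX w k (fun h => if (Z h : ℝ) < κ then 1 else 0) h ≤ Real.exp (κ - p / 2 * k) := by
  set M : List X → ℝ := fun h => if (Z h : ℝ) < κ then Real.exp (-Z h) else 0 with hMdef
  have he : Real.exp (-1) ≤ 1 / 2 := by
    rw [Real.exp_neg, one_div]
    apply inv_anti₀ (by norm_num)
    have := Real.add_one_le_exp 1
    linarith
  have hM : ∀ h, Inv h → ∑ x, w x * M (x :: h) ≤ Real.exp (-(p / 2)) * M h := by
    intro h hi
    by_cases hg : (Z h : ℝ) < κ
    · have h1 : ∀ x, M (x :: h) ≤ Real.exp (-Z h) *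
          (1 - 1 / 2 * (if Z h < Z (x :: h) then 1 else 0)) := by
        intro x
        have h2 : M (x :: h) ≤ Real.exp (-Z (x :: h)) := by
          simp only [hMdef]
          split_ifs
          · exact le_rfl
          · positivity
        refine h2.trans ?_
        split_ifs with h3
        · have h4 : (Z h : ℝ) + 1 ≤ Z (x :: h) := by exact_mod_cast h3
          calc Real.exp (-Z (x :: h)) ≤ Real.exp (-Z h + -1) :=
                Real.exp_le_exp.mpr (by linarith)
            _ = Real.exp (-Z h) * Real.exp (-1) := Real.exp_add _ _
            _ ≤ _ := by
              gcongr
              linarith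
        · have : (Z h : ℝ) ≤ Z (x :: h) := by exact_mod_cast hZ h x
          simp only [mul_zero, sub_zero, mul_one]
          exact Real.exp_le_exp.mpr (by linarith)
      calc ∑ x, w x * M (x :: h) ≤ ∑ x, w x * (Real.exp (-Z h) *
          (1 - 1 / 2 * (if Z h < Z (x :: h) then 1 else 0))) :=
            Finset.sum_le_sum fun x _ => mul_le_mul_of_nonneg_left (h1 x) (hw x)
        _ = Real.exp (-Z h) * (∑ x, w x - 1 / 2 *
            ∑ x, w x * (if Z h < Z (x :: h) then 1 else 0)) := by
            rw [mul_sub, Finset.mul_sum, Finset.mul_sum, Finset.mul_sum,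
              ← Finset.sum_sub_distrib]
            exact Finset.sum_congr rfl fun x _ => by ring
        _ ≤ Real.exp (-Z h) * (1 - 1 / 2 * p) := by
            rw [hw1]
            gcongr
            exact hp h hi hg
        _ ≤ Real.exp (-Z h) * Real.exp (-(p / 2)) := by
            gcongr
            have := Real.add_one_le_exp (-(p / 2))
            linarith
        _ = _ := by simp only [hMdef, hg, if_true]; ring
    · have : ∀ x, M (x :: h) = 0 := fun x => by
        simp only [hMdef]
        rw [if_neg]
        have : (Z h : ℝ) ≤ Z (x :: h) := by exact_mod_cast hZ h x
        linarith
      have h0 : M h = 0 := by simp [hMdef, hg]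
      simp only [this, h0, mul_zero, Finset.sum_const_zero, le_refl]
  have h5 := EX_super w hw Inv M _ (Real.exp_pos _).le hInv hM k h hh
  have h6 : M h ≤ 1 := by
    simp only [hMdef]
    split_ifs <;> simp
  calc EX w k (fun h => if (Z h : ℝ) < κ then 1 else 0) h
      ≤ EX w k (fun h => Real.exp κ * M h) h := by
        apply EX_mono w hw
        intro h
        split_ifs with h7
        · simp only [hMdef, if_pos h7, ← Real.exp_add]
          apply Real.one_le_exp
          linarith
        · simp only [hMdef]
          split_ifs <;> positivity
    _ = Real.exp κ * EX w k M h := EX_smul _ _ _ _ _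
    _ ≤ Real.exp κ * (Real.exp (-(p / 2)) ^ k * 1) := by
        gcongr
        exact h5.trans (mul_le_mul_of_nonneg_left h6 (by positivity))
    _ = _ := by
        rw [← Real.exp_nat_mul, mul_one, ← Real.exp_add]
        congr 1
        ring

end EXsec

/-! ### The abstract two-choice process -/

section TwoChoice
variable {V R : Type*} [DecidableEq V]

/-- The server picked by a step `x`, given loads `L`. -/
def pick (L : V → ℕ) (x : R × (V × V) × Bool) : V :=
  if L x.2.1.1 < L x.2.1.2 then x.2.1.1
  else if L x.2.1.2 < L x.2.1.1 then x.2.1.2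
  else if x.2.2 then x.2.1.1 else x.2.1.2

/-- Loads after a history (newest step first). -/
def lload : List (R × (V × V) × Bool) → V → ℕ
  | [] => fun _ => 0
  | x :: h => fun v => if v = pick (lload h) x then lload h v + 1 else lload h v

lemma lload_cons (x : R × (V × V) × Bool) (h : List (R × (V × V) × Bool)) (v : V) :
    lload (x :: h) v = lload h v + if v = pick (lload h) x then 1 else 0 := by
  simp only [lload]
  split_ifs <;> simp

lemma lload_mono (x : R × (V × V) × Bool) (h : List (R × (V × V) × Bool)) (v : V) :
    lload h v ≤ lload (x :: h) v := by
  rw [lload_cons]; omega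

lemma pick_mem (L : V → ℕ) (x : R × (V × V) × Bool) :
    (pick L x = x.2.1.1 ∨ pick L x = x.2.1.2) ∧ L (pick L x) ≤ L x.2.1.1 ∧
      L (pick L x) ≤ L x.2.1.2 := by
  unfold pick
  split_ifs <;> simp <;> omega

variable [Fintype V] [Fintype R]

/-- Step weights. -/
noncomputable def wt (S : R → Finset V) (x : R × (V × V) × Bool) : ℝ :=
  (1 / (Fintype.card R : ℝ)) * (1 / 2) *
    (if x.2.1.1 ∈ S x.1 ∧ x.2.1.2 ∈ S x.1 then 1 / ((S x.1).card : ℝ) ^ 2 else 0)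

/-- Probability that the first candidate is `v`. -/
noncomputable def pm (S : R → Finset V) (v : V) : ℝ :=
  ∑ ρ, (1 / (Fintype.card R : ℝ)) * (if v ∈ S ρ then 1 / ((S ρ).card : ℝ) else 0)

lemma wt_nonneg (S : R → Finset V) (x) : 0 ≤ wt S x := by
  unfold wt
  split_ifs <;> positivity

lemma pm_nonneg (S : R → Finset V) (v) : 0 ≤ pm S v := by
  unfold pm
  refine Finset.sum_nonneg fun ρ _ => ?_
  split_ifs <;> positivity

lemma sum_wt (S : R → Finset V) (f g : R → V → ℝ) (φ : Bool → ℝ) :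
    ∑ x, wt S x * (f x.1 x.2.1.1 * g x.1 x.2.1.2 * φ x.2.2) =
      ∑ ρ, (1 / (Fintype.card R : ℝ)) * ((∑ v ∈ S ρ, f ρ v) / (S ρ).card) *
        ((∑ v ∈ S ρ, g ρ v) / (S ρ).card) * ((φ true + φ false) / 2) := by
  rw [Fintype.sum_prod_type]
  refine Finset.sum_congr rfl fun ρ _ => ?_
  rw [Fintype.sum_prod_type]
  simp only [Fintype.sum_bool, wt]
  rw [Fintype.sum_prod_type]
  have h1 : ∑ v ∈ S ρ, f ρ v = ∑ v, if v ∈ S ρ then f ρ v else 0 := by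
    simp
  have h2 : ∑ v ∈ S ρ, g ρ v = ∑ v, if v ∈ S ρ then g ρ v else 0 := by
    simp
  rw [h1, h2]
  have h3 : ∀ a b : ℝ, (1 / (Fintype.card R : ℝ)) * (a / (S ρ).card) * (b / (S ρ).card) *
      ((φ true + φ false) / 2) = (a * b) * ((1 / (Fintype.card R : ℝ)) *
      (1 / ((S ρ).card : ℝ) ^ 2) * ((φ true + φ false) / 2)) := by
    intro a b
    rw [div_eq_mul_inv, div_eq_mul_inv b, one_div (((S ρ).card : ℝ) ^ 2), ← inv_pow]
    ring
  rw [h3, Finset.sum_mul_sum, Finset.sum_mul]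
  refine Finset.sum_congr rfl fun v _ => ?_
  rw [Finset.sum_mul]
  refine Finset.sum_congr rfl fun u _ => ?_
  by_cases hv : v ∈ S ρ <;> by_cases hu : u ∈ S ρ <;> simp [hv, hu]
  ring

lemma sum_pm (S : R → Finset V) (A : Finset V) :
    ∑ ρ, (1 / (Fintype.card R : ℝ)) * ((∑ v ∈ S ρ, if v ∈ A then (1 : ℝ) else 0) / (S ρ).card)
      = ∑ v ∈ A, pm S v := by
  unfold pm
  rw [Finset.sum_comm]
  refine Finset.sum_congr rfl fun ρ _ => ?_
  rw [← Finset.mul_sum]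
  congr 1
  rw [Finset.sum_div, ← Finset.sum_filter_add_sum_filter_not (S ρ) (fun v => v ∈ A),
    ← Finset.sum_filter]
  have : ∑ x ∈ S ρ with x ∉ A, (if x ∈ A then (1 : ℝ) else 0) / ((S ρ).card : ℝ) = 0 := by
    apply Finset.sum_eq_zero
    intro x hx
    simp [(Finset.mem_filter.mp hx).2]
  rw [this, add_zero, Finset.filter_mem_eq_inter, Finset.filter_mem_eq_inter,
    Finset.inter_comm]
  refine Finset.sum_congr rfl fun v hv => ?_
  rw [if_pos (Finset.mem_inter.mp hv).1]

lemma wt_sum [Nonempty R] (S : R → Finset V) (hS : ∀ ρ, 0 < (S ρ).card) :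
    ∑ x, wt S x = 1 := by
  have := sum_wt S (fun _ _ => 1) (fun _ _ => 1) (fun _ => 1)
  simp only [mul_one] at this
  rw [this]
  have h : ∀ ρ, ((S ρ).card : ℝ) ≠ 0 := fun ρ => by have := hS ρ; positivity
  simp [h, div_self]

/-- At most a fraction `β` of each candidate set has load at least `i`. -/
def HeavyLe (S : R → Finset V) (i : ℕ) (β : ℝ) (h : List (R × (V × V) × Bool)) : Prop :=
  ∀ ρ, (((S ρ).filter fun v => i ≤ lload h v).card : ℝ) ≤ β * (S ρ).card

/-- At least a fraction `β` of each candidate set has load at least `i`. -/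
def HeavyGe (S : R → Finset V) (i : ℕ) (β : ℝ) (h : List (R × (V × V) × Bool)) : Prop :=
  ∀ ρ, β * (S ρ).card ≤ (((S ρ).filter fun v => i ≤ lload h v).card : ℝ)

lemma HeavyLe_anti (S : R → Finset V) (i : ℕ) (β : ℝ) (h : List (R × (V × V) × Bool)) (x)
    (H : HeavyLe S i β (x :: h)) : HeavyLe S i β h := fun ρ => by
  refine le_trans ?_ (H ρ)
  exact_mod_cast Finset.card_le_card
    (Finset.monotone_filter_right _ fun v _ hv => le_trans hv (lload_mono x h v))

lemma HeavyGe_mono (S : R → Finset V) (i : ℕ) (β : ℝ) (h : List (R × (V × V) × Bool)) (x)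
    (H : HeavyGe S i β h) : HeavyGe S i β (x :: h) := fun ρ => by
  refine le_trans (H ρ) ?_
  exact_mod_cast Finset.card_le_card
    (Finset.monotone_filter_right _ fun v _ hv => le_trans hv (lload_mono x h v))

lemma step_upper (S : R → Finset V) (i : ℕ) (β : ℝ) (hβ : 0 ≤ β)
    (h : List (R × (V × V) × Bool)) (H : HeavyLe S i β h) (A : Finset V) :
    ∑ x, wt S x * (if pick (lload h) x ∈ A ∧ i ≤ lload h (pick (lload h) x) then 1 else 0)
      ≤ 2 * β * ∑ v ∈ A.filter (fun v => i ≤ lload h v), pm S v := by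
  set A' := A.filter (fun v => i ≤ lload h v) with hA'
  let f : R → V → ℝ := fun _ v => if v ∈ A' then 1 else 0
  let g : R → V → ℝ := fun _ v => if i ≤ lload h v then 1 else 0
  have hf : ∀ ρ v, 0 ≤ f ρ v := fun ρ v => by simp only [f]; split_ifs <;> norm_num
  have hg : ∀ ρ v, 0 ≤ g ρ v := fun ρ v => by simp only [g]; split_ifs <;> norm_num
  have hgS : ∀ ρ, (∑ v ∈ S ρ, g ρ v) / (S ρ).card ≤ β := by
    intro ρ
    simp only [g, Finset.sum_boole]
    exact div_le_of_le_mul₀ (by positivity) hβ (H ρ)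
  have hgS0 : ∀ ρ, 0 ≤ (∑ v ∈ S ρ, g ρ v) / (S ρ).card := fun ρ =>
    div_nonneg (Finset.sum_nonneg fun v _ => hg ρ v) (by positivity)
  have hfS0 : ∀ ρ, 0 ≤ (∑ v ∈ S ρ, f ρ v) / (S ρ).card := fun ρ =>
    div_nonneg (Finset.sum_nonneg fun v _ => hf ρ v) (by positivity)
  have key : ∀ x : R × (V × V) × Bool,
      (if pick (lload h) x ∈ A ∧ i ≤ lload h (pick (lload h) x) then (1 : ℝ) else 0) ≤
        f x.1 x.2.1.1 * g x.1 x.2.1.2 * 1 + g x.1 x.2.1.1 * f x.1 x.2.1.2 * 1 := by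
    intro x
    have hn1 := mul_nonneg (hf x.1 x.2.1.1) (hg x.1 x.2.1.2)
    have hn2 := mul_nonneg (hg x.1 x.2.1.1) (hf x.1 x.2.1.2)
    split_ifs with hx
    · obtain ⟨h1, h2, h3⟩ := pick_mem (lload h) x
      have hg1 : g x.1 x.2.1.1 = 1 := if_pos (hx.2.trans h2)
      have hg2 : g x.1 x.2.1.2 = 1 := if_pos (hx.2.trans h3)
      have hpA : pick (lload h) x ∈ A' := Finset.mem_filter.mpr hx
      rcases h1 with h1 | h1
      · have : f x.1 x.2.1.1 = 1 := if_pos (h1 ▸ hpA)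
        rw [this, hg1, hg2]
        have := hf x.1 x.2.1.2
        linarith
      · have : f x.1 x.2.1.2 = 1 := if_pos (h1 ▸ hpA)
        rw [this, hg1, hg2]
        have := hf x.1 x.2.1.1
        linarith
    · linarith
  have e1 := sum_wt S f g (fun _ => 1)
  have e2 := sum_wt S g f (fun _ => 1)
  have hR : (0 : ℝ) ≤ 1 / (Fintype.card R : ℝ) := by positivity
  calc ∑ x, wt S x * (if pick (lload h) x ∈ A ∧ i ≤ lload h (pick (lload h) x) then 1 else 0)
      ≤ ∑ x, wt S x * (f x.1 x.2.1.1 * g x.1 x.2.1.2 * 1 + g x.1 x.2.1.1 * f x.1 x.2.1.2 * 1) :=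
        Finset.sum_le_sum fun x _ => mul_le_mul_of_nonneg_left (key x) (wt_nonneg S x)
    _ = _ := by simp only [mul_add, Finset.sum_add_distrib]; rw [e1, e2]
    _ ≤ (∑ ρ, (1 / (Fintype.card R : ℝ)) * ((∑ v ∈ S ρ, f ρ v) / (S ρ).card) * β) +
        ∑ ρ, (1 / (Fintype.card R : ℝ)) * ((∑ v ∈ S ρ, f ρ v) / (S ρ).card) * β := by
        refine add_le_add (Finset.sum_le_sum fun ρ _ => ?_) (Finset.sum_le_sum fun ρ _ => ?_)
        · calc _ = (1 / (Fintype.card R : ℝ)) * ((∑ v ∈ S ρ, f ρ v) / (S ρ).card) *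
              ((∑ v ∈ S ρ, g ρ v) / (S ρ).card) := by ring
            _ ≤ _ := mul_le_mul_of_nonneg_left (hgS ρ) (mul_nonneg hR (hfS0 ρ))
        · calc _ = (1 / (Fintype.card R : ℝ)) * ((∑ v ∈ S ρ, f ρ v) / (S ρ).card) *
              ((∑ v ∈ S ρ, g ρ v) / (S ρ).card) := by ring
            _ ≤ _ := mul_le_mul_of_nonneg_left (hgS ρ) (mul_nonneg hR (hfS0 ρ))
    _ = _ := by
        rw [← Finset.sum_mul]
        have := sum_pm S A'
        simp only [f]
        rw [this]
        ring

/-- Excess over level `i` in a set of nodes. -/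
def excess (A : Finset V) (i : ℕ) (h : List (R × (V × V) × Bool)) : ℕ :=
  ∑ v ∈ A, (lload h v - i)

lemma excess_cons (A : Finset V) (i : ℕ) (x) (h : List (R × (V × V) × Bool)) :
    excess A i (x :: h) = excess A i h +
      if pick (lload h) x ∈ A ∧ i ≤ lload h (pick (lload h) x) then 1 else 0 := by
  unfold excess
  have : ∀ v, lload (x :: h) v - i = (lload h v - i) +
      if v = pick (lload h) x then (if i ≤ lload h (pick (lload h) x) then 1 else 0) else 0 := by
    intro v
    rw [lload_cons]
    by_cases hv : v = pick (lload h) x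
    · subst hv
      split_ifs <;> omega
    · simp [hv]
  simp only [this, Finset.sum_add_distrib, Finset.sum_ite_eq']
  congr 1
  split_ifs <;> simp_all

lemma excess_tail [Nonempty R] (S : R → Finset V) (hS : ∀ ρ, 0 < (S ρ).card) (n : ℕ)
    (hn : 0 < n) (hpm : ∀ v, pm S v ≤ 8 / n) (A : Finset V) (i : ℕ) (β σ θ κ : ℝ)
    (hβ : 0 ≤ β) (hθ : 0 ≤ θ)
    (hσ : ∀ h, HeavyLe S i β h → ((A.filter fun v => i ≤ lload h v).card : ℝ) ≤ σ) :
    EX (wt S) n (fun h => if HeavyLe S i β h ∧ κ ≤ (excess A i h : ℕ) then 1 else 0) [] ≤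
      Real.exp ((Real.exp θ - 1) * (16 * β * σ) - θ * κ) := by
  have hn' : (n : ℝ) ≠ 0 := by positivity
  have := EX_upper (wt S) (wt_nonneg S) (wt_sum S hS) (HeavyLe S i β) (excess A i)
    (16 * β * σ / n) θ κ hθ (fun h x => HeavyLe_anti S i β h x)
    (fun h x => by rw [excess_cons]; split_ifs <;> omega) (by simp [excess, lload])
    (by
      intro h H
      have h1 := step_upper S i β hβ h H A
      have h2 : ∀ x : R × (V × V) × Bool,
          (if excess A i h < excess A i (x :: h) then (1 : ℝ) else 0) =
          (if pick (lload h) x ∈ A ∧ i ≤ lload h (pick (lload h) x) then 1 else 0) := by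
        intro x
        rw [excess_cons]
        by_cases hx : pick (lload h) x ∈ A ∧ i ≤ lload h (pick (lload h) x) <;> simp [hx]
      simp only [h2]
      refine h1.trans ?_
      have h3 : ∑ v ∈ A.filter (fun v => i ≤ lload h v), pm S v ≤
          ((A.filter fun v => i ≤ lload h v).card : ℝ) * (8 / n) := by
        rw [← nsmul_eq_mul]
        exact Finset.sum_le_card_nsmul _ _ _ fun v _ => hpm v
      calc _ ≤ 2 * β * (σ * (8 / n)) := by
            gcongr
            exact h3.trans (mul_le_mul_of_nonneg_right (hσ h H) (by positivity))
        _ = _ := by ring) n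
  refine this.trans (le_of_eq ?_)
  congr 1
  field_simp

end TwoChoice

section TwoChoiceUpper
variable {V R : Type*} [DecidableEq V] [Fintype V] [Fintype R]

lemma exp_one_sub : Real.exp 1 - 1 ≤ 2 := by
  have := Real.exp_one_lt_three
  linarith

lemma upper_base [Nonempty R] (S : R → Finset V) (hS : ∀ ρ, 0 < (S ρ).card) (n : ℕ)
    (hn : 0 < n) (hpm : ∀ v, pm S v ≤ 8 / n) (s0 : ℝ) (hs0 : ∀ ρ, s0 ≤ (S ρ).card) :
    EX (wt S) n (fun h => if ¬ HeavyLe S 8192 (1 / 128) h then 1 else 0) [] ≤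
      Fintype.card R * Real.exp (-s0) := by
  have h1 : ∀ h : List (R × (V × V) × Bool),
      (if ¬ HeavyLe S 8192 (1 / 128) h then (1 : ℝ) else 0) ≤
      ∑ ρ, if HeavyLe S 0 1 h ∧ 64 * ((S ρ).card : ℝ) ≤ (excess (S ρ) 0 h : ℕ) then 1 else 0 := by
    intro h
    have hnn : ∀ ρ ∈ (Finset.univ : Finset R), (0 : ℝ) ≤
        if HeavyLe S 0 1 h ∧ 64 * ((S ρ).card : ℝ) ≤ (excess (S ρ) 0 h : ℕ) then 1 else 0 := by
      intro ρ _
      split_ifs <;> norm_num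
    by_cases hh : HeavyLe S 8192 (1 / 128) h
    swap
    · rw [if_pos hh]
      unfold HeavyLe at hh
      push Not at hh
      obtain ⟨ρ, hρ⟩ := hh
      refine le_trans ?_ (Finset.single_le_sum hnn (Finset.mem_univ ρ))
      rw [if_pos]
      refine ⟨fun ρ' => by simp, ?_⟩
      have h2 : 8192 * ((S ρ).filter fun v => 8192 ≤ lload h v).card ≤ excess (S ρ) 0 h := by
        unfold excess
        calc 8192 * ((S ρ).filter fun v => 8192 ≤ lload h v).card
            = ∑ v ∈ (S ρ).filter fun v => 8192 ≤ lload h v, 8192 := by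
              rw [Finset.sum_const, smul_eq_mul, mul_comm]
          _ ≤ ∑ v ∈ (S ρ).filter fun v => 8192 ≤ lload h v, (lload h v - 0) :=
              Finset.sum_le_sum fun v hv => (Finset.mem_filter.mp hv).2
          _ ≤ _ := Finset.sum_le_sum_of_subset (Finset.filter_subset _ _)
      have h3 : (8192 : ℝ) * ((S ρ).filter fun v => 8192 ≤ lload h v).card ≤
        (excess (S ρ) 0 h : ℕ) := by exact_mod_cast h2
      linarith
    · rw [if_neg (not_not.mpr hh)]
      exact Finset.sum_nonneg hnn
  refine (EX_mono (wt S) (wt_nonneg S) h1 n []).trans ?_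
  rw [EX_sum]
  have h4 : ∀ ρ ∈ (Finset.univ : Finset R), EX (wt S) n (fun h => if HeavyLe S 0 1 h ∧
      64 * ((S ρ).card : ℝ) ≤ (excess (S ρ) 0 h : ℕ) then 1 else 0) [] ≤ Real.exp (-s0) := by
    intro ρ _
    refine (excess_tail S hS n hn hpm (S ρ) 0 1 (S ρ).card 1 (64 * (S ρ).card) zero_le_one
      zero_le_one (fun h _ => by exact_mod_cast Finset.card_filter_le _ _)).trans ?_
    apply Real.exp_le_exp.mpr
    have h5 := hs0 ρ
    have h6 : (0 : ℝ) ≤ (S ρ).card := by positivity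
    nlinarith [exp_one_sub]
  refine (Finset.sum_le_card_nsmul _ _ _ h4).trans (le_of_eq ?_)
  simp

lemma upper_step [Nonempty R] (S : R → Finset V) (hS : ∀ ρ, 0 < (S ρ).card) (n : ℕ)
    (hn : 0 < n) (hpm : ∀ v, pm S v ≤ 8 / n) (s0 : ℝ) (hs0 : ∀ ρ, s0 ≤ (S ρ).card)
    (i : ℕ) (β : ℝ) (hβ : 0 ≤ β) :
    EX (wt S) n (fun h => if ¬ HeavyLe S (i + 1) (64 * β ^ 2) h then 1 else 0) [] ≤
      EX (wt S) n (fun h => if ¬ HeavyLe S i β h then 1 else 0) [] +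
      Fintype.card R * Real.exp (-(β ^ 2 * s0)) := by
  have h1 : ∀ h : List (R × (V × V) × Bool),
      (if ¬ HeavyLe S (i + 1) (64 * β ^ 2) h then (1 : ℝ) else 0) ≤
      (if ¬ HeavyLe S i β h then 1 else 0) +
      ∑ ρ, if HeavyLe S i β h ∧ 64 * β ^ 2 * ((S ρ).card : ℝ) ≤ (excess (S ρ) i h : ℕ)
        then 1 else 0 := by
    intro h
    have hnn : ∀ ρ ∈ (Finset.univ : Finset R), (0 : ℝ) ≤
        if HeavyLe S i β h ∧ 64 * β ^ 2 * ((S ρ).card : ℝ) ≤ (excess (S ρ) i h : ℕ)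
        then 1 else 0 := by
      intro ρ _
      split_ifs <;> norm_num
    by_cases hi : HeavyLe S i β h
    swap
    · have := Finset.sum_nonneg hnn
      rw [if_pos hi]
      split_ifs <;> linarith
    rw [if_neg (not_not.mpr hi), zero_add]
    by_cases hh : HeavyLe S (i + 1) (64 * β ^ 2) h
    · rw [if_neg (not_not.mpr hh)]
      exact Finset.sum_nonneg hnn
    · rw [if_pos hh]
      unfold HeavyLe at hh
      push Not at hh
      obtain ⟨ρ, hρ⟩ := hh
      refine le_trans ?_ (Finset.single_le_sum hnn (Finset.mem_univ ρ))
      rw [if_pos]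
      refine ⟨hi, ?_⟩
      have h2 : ((S ρ).filter fun v => i + 1 ≤ lload h v).card ≤ excess (S ρ) i h := by
        unfold excess
        calc ((S ρ).filter fun v => i + 1 ≤ lload h v).card
            = ∑ v ∈ (S ρ).filter fun v => i + 1 ≤ lload h v, 1 := by
              simp
          _ ≤ ∑ v ∈ (S ρ).filter fun v => i + 1 ≤ lload h v, (lload h v - i) :=
              Finset.sum_le_sum fun v hv => by
                have := (Finset.mem_filter.mp hv).2
                omega
          _ ≤ _ := Finset.sum_le_sum_of_subset (Finset.filter_subset _ _)
      have h3 : (((S ρ).filter fun v => i + 1 ≤ lload h v).card : ℝ) ≤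
        (excess (S ρ) i h : ℕ) := by exact_mod_cast h2
      linarith
  refine (EX_mono (wt S) (wt_nonneg S) h1 n []).trans ?_
  rw [EX_add, EX_sum]
  gcongr
  have h4 : ∀ ρ ∈ (Finset.univ : Finset R), EX (wt S) n (fun h => if HeavyLe S i β h ∧
      64 * β ^ 2 * ((S ρ).card : ℝ) ≤ (excess (S ρ) i h : ℕ) then 1 else 0) [] ≤
      Real.exp (-(β ^ 2 * s0)) := by
    intro ρ _
    refine (excess_tail S hS n hn hpm (S ρ) i β (β * (S ρ).card) 1 (64 * β ^ 2 * (S ρ).card)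
      hβ zero_le_one (fun h H => H ρ)).trans ?_
    apply Real.exp_le_exp.mpr
    have h5 := hs0 ρ
    have h6 : (0 : ℝ) ≤ (S ρ).card := by positivity
    have h7 : β ^ 2 * s0 ≤ β ^ 2 * (S ρ).card := mul_le_mul_of_nonneg_left h5 (by positivity)
    have h8 : 0 ≤ β ^ 2 * (S ρ).card := by positivity
    have h9 : (Real.exp 1 - 1) * (β ^ 2 * (S ρ).card) ≤ 2 * (β ^ 2 * (S ρ).card) :=
      mul_le_mul_of_nonneg_right exp_one_sub h8
    nlinarith
  refine (Finset.sum_le_card_nsmul _ _ _ h4).trans (le_of_eq ?_)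
  simp

/-- Doubly exponentially decreasing fractions. -/
noncomputable def bseq (j : ℕ) : ℝ := (1 / 64) * (1 / 2) ^ (2 ^ j)

lemma bseq_succ (j : ℕ) : bseq (j + 1) = 64 * bseq j ^ 2 := by
  unfold bseq
  rw [pow_succ, pow_mul]
  ring

lemma bseq_pos (j : ℕ) : 0 < bseq j := by unfold bseq; positivity

lemma bseq_le_one (j : ℕ) : bseq j ≤ 1 / 64 := by
  unfold bseq
  have : ((1 : ℝ) / 2) ^ (2 ^ j) ≤ 1 := pow_le_one₀ (by norm_num) (by norm_num)
  linarith

lemma bseq_anti (j : ℕ) : bseq (j + 1) ≤ bseq j := by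
  rw [bseq_succ]
  nlinarith [bseq_pos j, bseq_le_one j]

lemma upper_levels [Nonempty R] (S : R → Finset V) (hS : ∀ ρ, 0 < (S ρ).card) (n : ℕ)
    (hn : 0 < n) (hpm : ∀ v, pm S v ≤ 8 / n) (s0 : ℝ) (hs : 0 ≤ s0)
    (hs0 : ∀ ρ, s0 ≤ (S ρ).card) (j : ℕ) :
    EX (wt S) n (fun h => if ¬ HeavyLe S (8192 + j) (bseq j) h then 1 else 0) [] ≤
      (j + 1) * (Fintype.card R * Real.exp (-(bseq j ^ 2 * s0))) := by
  induction j with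
  | zero =>
    have h0 : bseq 0 = 1 / 128 := by norm_num [bseq]
    have := upper_base S hS n hn hpm s0 hs0
    rw [h0]
    refine this.trans ?_
    simp only [Nat.cast_zero, zero_add, one_mul]
    gcongr
    nlinarith
  | succ j ih =>
    have h1 := upper_step S hS n hn hpm s0 hs0 (8192 + j) (bseq j) (bseq_pos j).le
    rw [← bseq_succ] at h1
    refine h1.trans ?_
    have h2 : bseq (j + 1) ^ 2 ≤ bseq j ^ 2 :=
      pow_le_pow_left₀ (bseq_pos _).le (bseq_anti j) 2
    have h3 : Real.exp (-(bseq j ^ 2 * s0)) ≤ Real.exp (-(bseq (j + 1) ^ 2 * s0)) := by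
      apply Real.exp_le_exp.mpr
      nlinarith
    have h4 : (Fintype.card R : ℝ) * Real.exp (-(bseq j ^ 2 * s0)) ≤
      Fintype.card R * Real.exp (-(bseq (j + 1) ^ 2 * s0)) := by gcongr
    push_cast
    have h5 : ((j : ℝ) + 1) * ((Fintype.card R : ℝ) * Real.exp (-(bseq j ^ 2 * s0))) ≤
      (j + 1) * (Fintype.card R * Real.exp (-(bseq (j + 1) ^ 2 * s0))) := by gcongr
    linarith

theorem upper_main [Nonempty R] (S : R → Finset V) (hS : ∀ ρ, 0 < (S ρ).card) (n : ℕ)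
    (hn : 0 < n) (hpm : ∀ v, pm S v ≤ 8 / n) (s0 : ℝ) (hs : 0 ≤ s0)
    (hs0 : ∀ ρ, s0 ≤ (S ρ).card) (J k : ℕ) (θ : ℝ) (hθ : 0 ≤ θ) :
    EX (wt S) n (fun h => if ∃ v, 8192 + J + k ≤ lload h v then 1 else 0) [] ≤
      (J + 1) * (Fintype.card R * Real.exp (-(bseq J ^ 2 * s0))) +
      Fintype.card V * Real.exp (Real.exp θ * (16 * bseq J) - θ * k) := by
  have h1 : ∀ h : List (R × (V × V) × Bool),
      (if ∃ v, 8192 + J + k ≤ lload h v then (1 : ℝ) else 0) ≤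
      (if ¬ HeavyLe S (8192 + J) (bseq J) h then 1 else 0) +
      ∑ v, if HeavyLe S (8192 + J) (bseq J) h ∧ (k : ℝ) ≤ (excess {v} (8192 + J) h : ℕ)
        then 1 else 0 := by
    intro h
    have hnn : ∀ v ∈ (Finset.univ : Finset V), (0 : ℝ) ≤
        if HeavyLe S (8192 + J) (bseq J) h ∧ (k : ℝ) ≤ (excess {v} (8192 + J) h : ℕ)
        then 1 else 0 := by
      intro ρ _
      split_ifs <;> norm_num
    have hs := Finset.sum_nonneg hnn
    by_cases hi : HeavyLe S (8192 + J) (bseq J) h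
    swap
    · rw [if_pos hi]
      split_ifs <;> linarith
    rw [if_neg (not_not.mpr hi), zero_add]
    split_ifs with hh
    · obtain ⟨v, hv⟩ := hh
      refine le_trans ?_ (Finset.single_le_sum hnn (Finset.mem_univ v))
      rw [if_pos]
      refine ⟨hi, ?_⟩
      have : k ≤ excess {v} (8192 + J) h := by
        simp only [excess, Finset.sum_singleton]
        omega
      exact_mod_cast this
    · exact hs
  refine (EX_mono (wt S) (wt_nonneg S) h1 n []).trans ?_
  rw [EX_add, EX_sum]
  gcongr
  · exact upper_levels S hS n hn hpm s0 hs hs0 J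
  have h4 : ∀ v ∈ (Finset.univ : Finset V), EX (wt S) n (fun h =>
      if HeavyLe S (8192 + J) (bseq J) h ∧ (k : ℝ) ≤ (excess {v} (8192 + J) h : ℕ)
        then 1 else 0) [] ≤ Real.exp (Real.exp θ * (16 * bseq J) - θ * k) := by
    intro v _
    refine (excess_tail S hS n hn hpm {v} (8192 + J) (bseq J) 1 θ k
      (bseq_pos J).le hθ (fun h H => ?_)).trans ?_
    · exact_mod_cast (Finset.card_filter_le _ _).trans (by simp)
    · apply Real.exp_le_exp.mpr
      have := bseq_pos J
      nlinarith
  refine (Finset.sum_le_card_nsmul _ _ _ h4).trans (le_of_eq ?_)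
  simp

end TwoChoiceUpper

section TwoChoiceLower
variable {V R : Type*} [DecidableEq V] [Fintype V] [Fintype R]

lemma step_lower (S : R → Finset V) (hS : ∀ ρ, 0 < (S ρ).card) (i : ℕ) (γ : ℝ) (hγ : 0 ≤ γ)
    (h : List (R × (V × V) × Bool)) (H : HeavyGe S i γ h) (A : Finset V) :
    γ / 2 * ∑ v ∈ A.filter (fun v => lload h v = i), pm S v ≤
    ∑ x, wt S x * (if (A.filter fun v => i + 1 ≤ lload h v).card <
      (A.filter fun v => i + 1 ≤ lload (x :: h) v).card then 1 else 0) := by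
  set A' := A.filter (fun v => lload h v = i) with hA'
  let f : R → V → ℝ := fun _ v => if v ∈ A' then 1 else 0
  let g : R → V → ℝ := fun _ v => if i ≤ lload h v then 1 else 0
  let φ : Bool → ℝ := fun b => if b then 1 else 0
  have hf : ∀ ρ v, 0 ≤ f ρ v := fun ρ v => by simp only [f]; split_ifs <;> norm_num
  have hgS : ∀ ρ, γ ≤ (∑ v ∈ S ρ, g ρ v) / (S ρ).card := by
    intro ρ
    simp only [g, Finset.sum_boole]
    rw [le_div_iff₀ (by exact_mod_cast hS ρ)]
    exact H ρ
  have hfS0 : ∀ ρ, 0 ≤ (∑ v ∈ S ρ, f ρ v) / (S ρ).card := fun ρ =>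
    div_nonneg (Finset.sum_nonneg fun v _ => hf ρ v) (by positivity)
  have key : ∀ x : R × (V × V) × Bool,
      f x.1 x.2.1.1 * g x.1 x.2.1.2 * φ x.2.2 ≤
      (if (A.filter fun v => i + 1 ≤ lload h v).card <
      (A.filter fun v => i + 1 ≤ lload (x :: h) v).card then (1 : ℝ) else 0) := by
    intro x
    by_cases h1 : x.2.1.1 ∈ A' ∧ i ≤ lload h x.2.1.2 ∧ x.2.2 = true
    · obtain ⟨h1, h2, h3⟩ := h1
      obtain ⟨h1, h4⟩ := Finset.mem_filter.mp h1
      have hp : pick (lload h) x = x.2.1.1 := by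
        unfold pick
        rw [h3]
        by_cases h5 : lload h x.2.1.1 < lload h x.2.1.2
        · rw [if_pos h5]
        · rw [if_neg h5, if_neg (by omega)]
          simp
      rw [if_pos]
      · simp only [f, g, φ]
        split_ifs <;> norm_num
      · apply Finset.card_lt_card
        rw [Finset.ssubset_iff_of_subset
          (Finset.monotone_filter_right _ fun v _ hv => le_trans hv (lload_mono x h v))]
        refine ⟨x.2.1.1, Finset.mem_filter.mpr ⟨h1, ?_⟩, fun h6 => ?_⟩
        · rw [lload_cons, hp]
          simp
          omega
        · have := (Finset.mem_filter.mp h6).2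
          omega
    · have : f x.1 x.2.1.1 * g x.1 x.2.1.2 * φ x.2.2 = 0 := by
        simp only [f, g, φ]
        by_cases a1 : x.2.1.1 ∈ A' <;> by_cases a2 : i ≤ lload h x.2.1.2 <;>
          by_cases a3 : x.2.2 = true <;> simp [a1, a2, a3] at h1 ⊢
      rw [this]
      split_ifs <;> norm_num
  have e1 := sum_wt S f g φ
  have hR : (0 : ℝ) ≤ 1 / (Fintype.card R : ℝ) := by positivity
  calc γ / 2 * ∑ v ∈ A', pm S v
      = ∑ ρ, (1 / (Fintype.card R : ℝ)) * ((∑ v ∈ S ρ, f ρ v) / (S ρ).card) *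
          γ * ((φ true + φ false) / 2) := by
        rw [← sum_pm S A', Finset.mul_sum]
        refine Finset.sum_congr rfl fun ρ _ => ?_
        simp only [f, φ]
        norm_num
        ring
    _ ≤ _ := by
        refine Finset.sum_le_sum fun ρ _ => ?_
        refine mul_le_mul_of_nonneg_right
          (mul_le_mul_of_nonneg_left (hgS ρ) (mul_nonneg hR (hfS0 ρ))) ?_
        simp [φ]
    _ = _ := e1.symm
    _ ≤ _ := Finset.sum_le_sum fun x _ => mul_le_mul_of_nonneg_left (key x) (wt_nonneg S x)

lemma lower_step [Nonempty R] (S : R → Finset V) (hS : ∀ ρ, 0 < (S ρ).card) (n : ℕ)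
    (hn : 0 < n) (hpm : ∀ v, 1 / (12 * n) ≤ pm S v) (s0 : ℝ) (hs0 : ∀ ρ, s0 ≤ (S ρ).card)
    (i : ℕ) (γ γ' : ℝ) (hγ : 0 ≤ γ) (hγ' : 0 ≤ γ') (hγγ : γ' ≤ γ / 2) (T : ℕ)
    (hT : γ' * (192 * n) ≤ γ ^ 2 * T) (h : List (R × (V × V) × Bool)) (hh : HeavyGe S i γ h) :
    EX (wt S) T (fun h => if ¬ HeavyGe S (i + 1) γ' h then 1 else 0) h ≤
      Fintype.card R * Real.exp (-(γ' * s0)) := by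
  have h1 : ∀ h : List (R × (V × V) × Bool),
      (if ¬ HeavyGe S (i + 1) γ' h then (1 : ℝ) else 0) ≤
      ∑ ρ, if ((((S ρ).filter fun v => i + 1 ≤ lload h v).card : ℕ) : ℝ) < γ' * (S ρ).card
        then 1 else 0 := by
    intro h
    have hnn : ∀ ρ ∈ (Finset.univ : Finset R), (0 : ℝ) ≤
        if ((((S ρ).filter fun v => i + 1 ≤ lload h v).card : ℕ) : ℝ) < γ' * (S ρ).card
        then 1 else 0 := by
      intro ρ _
      split_ifs <;> norm_num
    by_cases hh : HeavyGe S (i + 1) γ' h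
    · rw [if_neg (not_not.mpr hh)]
      exact Finset.sum_nonneg hnn
    · rw [if_pos hh]
      unfold HeavyGe at hh
      push Not at hh
      obtain ⟨ρ, hρ⟩ := hh
      refine le_trans ?_ (Finset.single_le_sum hnn (Finset.mem_univ ρ))
      rw [if_pos hρ]
  refine (EX_mono (wt S) (wt_nonneg S) h1 T h).trans ?_
  rw [EX_sum]
  have hn' : (0 : ℝ) < n := by exact_mod_cast hn
  have h4 : ∀ ρ ∈ (Finset.univ : Finset R), EX (wt S) T (fun h =>
      if ((((S ρ).filter fun v => i + 1 ≤ lload h v).card : ℕ) : ℝ) < γ' * (S ρ).card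
        then 1 else 0) h ≤ Real.exp (-(γ' * s0)) := by
    intro ρ _
    refine (EX_lower (wt S) (wt_nonneg S) (wt_sum S hS) (HeavyGe S i γ)
      (fun h => ((S ρ).filter fun v => i + 1 ≤ lload h v).card)
      (γ ^ 2 * (S ρ).card / (48 * n)) (γ' * (S ρ).card)
      (fun h x => HeavyGe_mono S i γ h x) ?_ ?_ T h hh).trans ?_
    · intro h x
      exact Finset.card_le_card
        (Finset.monotone_filter_right _ fun v _ hv => le_trans hv (lload_mono x h v))
    · intro h H hZ
      refine le_trans ?_ (step_lower S hS i γ hγ h H (S ρ))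
      have h2 : ((S ρ).filter fun v => i ≤ lload h v).card ≤
          ((S ρ).filter fun v => lload h v = i).card +
          ((S ρ).filter fun v => i + 1 ≤ lload h v).card := by
        refine le_trans (Finset.card_le_card ?_) (Finset.card_union_le _ _)
        intro v hv
        simp only [Finset.mem_filter, Finset.mem_union] at hv ⊢
        have := hv.2
        by_cases h3 : lload h v = i
        · exact Or.inl ⟨hv.1, h3⟩
        · exact Or.inr ⟨hv.1, by omega⟩
      have h3 : (((S ρ).filter fun v => i ≤ lload h v).card : ℝ) ≤
          ((S ρ).filter fun v => lload h v = i).card +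
          ((S ρ).filter fun v => i + 1 ≤ lload h v).card := by exact_mod_cast h2
      have h4 := H ρ
      have h5 : γ / 2 * (S ρ).card ≤ ((S ρ).filter fun v => lload h v = i).card := by
        have : γ' * (S ρ).card ≤ γ / 2 * (S ρ).card :=
          mul_le_mul_of_nonneg_right hγγ (by positivity)
        linarith
      have h6 : (((S ρ).filter fun v => lload h v = i).card : ℝ) * (1 / (12 * n)) ≤
          ∑ v ∈ (S ρ).filter (fun v => lload h v = i), pm S v := by
        rw [← nsmul_eq_mul]
        exact Finset.card_nsmul_le_sum _ _ _ fun v _ => hpm v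
      calc γ ^ 2 * (S ρ).card / (48 * n) = γ / 2 * ((γ / 2 * (S ρ).card) * (1 / (12 * n))) := by
            field_simp
            ring
        _ ≤ γ / 2 * ((((S ρ).filter fun v => lload h v = i).card : ℝ) * (1 / (12 * n))) := by
            gcongr
        _ ≤ _ := by gcongr
    · apply Real.exp_le_exp.mpr
      have h6 : γ' * s0 ≤ γ' * (S ρ).card := mul_le_mul_of_nonneg_left (hs0 ρ) hγ'
      have h7 : 2 * (γ' * (S ρ).card) ≤ γ ^ 2 * (S ρ).card / (48 * n) / 2 * T := by
        have h8 : γ ^ 2 * (S ρ).card / (48 * n) / 2 * T =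
          (γ ^ 2 * T) * (S ρ).card / (96 * n) := by
          field_simp
          ring
        rw [h8, le_div_iff₀ (by positivity)]
        have : γ' * (192 * n) * (S ρ).card ≤ γ ^ 2 * T * (S ρ).card :=
          mul_le_mul_of_nonneg_right hT (by positivity)
        linarith
      linarith
  refine (Finset.sum_le_card_nsmul _ _ _ h4).trans (le_of_eq ?_)
  simp

/-- Doubly exponentially decreasing lower fractions. -/
noncomputable def gseq (A : ℝ) (j : ℕ) : ℝ := A * (1 / A) ^ (2 ^ j)

lemma gseq_zero {A : ℝ} (hA : 0 < A) : gseq A 0 = 1 := by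
  unfold gseq
  rw [pow_zero, pow_one]
  field_simp

lemma gseq_succ {A : ℝ} (hA : 0 < A) (j : ℕ) : gseq A (j + 1) * A = gseq A j ^ 2 := by
  unfold gseq
  rw [pow_succ, pow_mul]
  ring

lemma gseq_pos {A : ℝ} (hA : 0 < A) (j : ℕ) : 0 < gseq A j := by
  unfold gseq; positivity

lemma gseq_bound {A : ℝ} (hA : 2 ≤ A) (j : ℕ) :
    gseq A j ≤ 1 ∧ gseq A (j + 1) ≤ gseq A j / 2 := by
  have hA0 : 0 < A := by linarith
  induction j with
  | zero =>
    have h1 := gseq_succ hA0 0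
    rw [gseq_zero hA0] at h1 ⊢
    have := gseq_pos hA0 (0 + 1)
    exact ⟨le_rfl, by nlinarith⟩
  | succ j ih =>
    have h0 := gseq_pos hA0 j
    have h1 := gseq_pos hA0 (j + 1)
    have h2 := gseq_pos hA0 (j + 1 + 1)
    have h3 := gseq_succ hA0 (j + 1)
    have h4 : gseq A (j + 1) ≤ 1 := by linarith [ih.1, ih.2]
    exact ⟨h4, by nlinarith⟩

lemma gseq_anti {A : ℝ} (hA : 2 ≤ A) : Antitone (gseq A) :=
  antitone_nat_of_succ_le fun j => by
    have := gseq_bound hA j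
    have := gseq_pos (show 0 < A by linarith) j
    linarith

lemma EX_persist {X : Type*} [Fintype X] (w : X → ℝ) (hw : ∀ x, 0 ≤ w x)
    (hw1 : ∑ x, w x = 1) (P : List X → Prop) (hP : ∀ h x, P h → P (x :: h)) (k : ℕ)
    (h : List X) :
    EX w k (fun h => if ¬ P h then 1 else 0) h ≤ if ¬ P h then 1 else 0 := by
  by_cases hh : P h
  · have := EX_super w hw P (fun h => if ¬ P h then 1 else 0) 1 zero_le_one hP (by
      intro h hp
      simp [hp, hP h _ hp]) k h hh
    simpa using this
  · rw [if_pos hh]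
    calc _ ≤ EX w k (fun _ => 1) h := EX_mono w hw (fun h => by split_ifs <;> norm_num) k h
      _ = 1 := EX_const w hw1 1 k h

lemma lower_levels [Nonempty R] (S : R → Finset V) (hS : ∀ ρ, 0 < (S ρ).card) (n : ℕ)
    (hn : 0 < n) (hpm : ∀ v, 1 / (12 * n) ≤ pm S v) (s0 : ℝ) (hs : 0 ≤ s0)
    (hs0 : ∀ ρ, s0 ≤ (S ρ).card) (L T : ℕ) (hL : 0 < L) (hT : n ≤ 2 * L * T) (i : ℕ)
    (hi : i ≤ L) :
    EX (wt S) (i * T) (fun h => if ¬ HeavyGe S i (gseq (384 * L) i) h then 1 else 0) [] ≤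
      i * (Fintype.card R * Real.exp (-(gseq (384 * L) L * s0))) := by
  have hL' : (1 : ℝ) ≤ L := by exact_mod_cast hL
  have hA : (2 : ℝ) ≤ 384 * L := by linarith
  have hA0 : (0 : ℝ) < 384 * L := by linarith
  induction i with
  | zero =>
    have : ∀ h, HeavyGe S 0 (gseq (384 * L) 0) h := by
      intro h ρ
      rw [gseq_zero hA0]
      simp
    simp [EX, this]
  | succ i ih =>
    have ih := ih (by omega)
    have h1 : ∀ h, EX (wt S) T (fun h => if ¬ HeavyGe S (i + 1) (gseq (384 * L) (i + 1)) h
        then 1 else 0) h ≤ (if ¬ HeavyGe S i (gseq (384 * L) i) h then 1 else 0) +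
        Fintype.card R * Real.exp (-(gseq (384 * L) L * s0)) := by
      intro h
      by_cases hh : HeavyGe S i (gseq (384 * L) i) h
      · rw [if_neg (not_not.mpr hh), zero_add]
        refine (lower_step S hS n hn hpm s0 hs0 i (gseq (384 * L) i) (gseq (384 * L) (i + 1))
          (gseq_pos hA0 _).le (gseq_pos hA0 _).le (gseq_bound hA i).2 T ?_ h hh).trans ?_
        · rw [← gseq_succ hA0 i]
          have h2 : (n : ℝ) ≤ 2 * L * T := by exact_mod_cast hT
          have h3 := gseq_pos hA0 (i + 1)
          calc _ ≤ gseq (384 * L) (i + 1) * (192 * (2 * L * T)) := by gcongr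
            _ = _ := by ring
        · gcongr
          exact gseq_anti hA hi
      · rw [if_pos hh]
        have : EX (wt S) T (fun h => if ¬ HeavyGe S (i + 1) (gseq (384 * L) (i + 1)) h
          then 1 else 0) h ≤ 1 := by
          calc _ ≤ EX (wt S) T (fun _ => 1) h :=
                EX_mono _ (wt_nonneg S) (fun h => by split_ifs <;> norm_num) T h
            _ = 1 := EX_const _ (wt_sum S hS) 1 T h
        have h2 : 0 ≤ Fintype.card R * Real.exp (-(gseq (384 * L) L * s0)) := by positivity
        linarith
    rw [Nat.succ_mul, EX_comp]
    refine (EX_mono (wt S) (wt_nonneg S) h1 _ []).trans ?_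
    rw [EX_add, EX_const _ (wt_sum S hS)]
    push_cast
    linarith

theorem lower_main [Nonempty R] (S : R → Finset V) (hS : ∀ ρ, 0 < (S ρ).card) (n : ℕ)
    (hn : 0 < n) (hpm : ∀ v, 1 / (12 * n) ≤ pm S v) (s0 : ℝ) (hs : 0 ≤ s0)
    (hs0 : ∀ ρ, s0 ≤ (S ρ).card) (L : ℕ) (hL : 0 < L) (hLn : L ≤ n) :
    EX (wt S) n (fun h => if ∀ v, lload h v < L then 1 else 0) [] ≤
      L * (Fintype.card R * Real.exp (-(gseq (384 * L) L * s0))) := by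
  have hL' : (1 : ℝ) ≤ L := by exact_mod_cast hL
  have hA0 : (0 : ℝ) < 384 * L := by linarith
  have hLT : L * (n / L) ≤ n := Nat.mul_div_le n L
  have hT : n ≤ 2 * L * (n / L) := by
    have h1 := Nat.div_add_mod n L
    have h2 := Nat.mod_lt n hL
    have h3 : 1 ≤ n / L := (Nat.one_le_div_iff hL).mpr hLn
    nlinarith
  have h1 := lower_levels S hS n hn hpm s0 hs hs0 L (n / L) hL hT L le_rfl
  refine le_trans ?_ h1
  obtain ⟨k, hk⟩ := Nat.exists_eq_add_of_le hLT
  rw [hk]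
  conv_lhs => rw [EX_comp]
  rw [← hk]
  apply EX_mono _ (wt_nonneg S)
  intro h
  refine le_trans ?_ (EX_persist (wt S) (wt_nonneg S) (wt_sum S hS)
    (HeavyGe S L (gseq (384 * L) L)) (fun h x => HeavyGe_mono S L _ h x) k h)
  apply EX_mono _ (wt_nonneg S)
  intro h
  by_cases hh : HeavyGe S L (gseq (384 * L) L) h
  · rw [if_neg]
    · split_ifs <;> norm_num
    · intro hv
      obtain ⟨ρ⟩ := ‹Nonempty R›
      have h2 := hh ρ
      have h3 : ((S ρ).filter fun v => L ≤ lload h v) = ∅ := by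
        apply Finset.filter_eq_empty_iff.mpr
        intro v _
        exact not_le.mpr (hv v)
      rw [h3] at h2
      have h4 : (0 : ℝ) < (S ρ).card := by exact_mod_cast hS ρ
      have := mul_pos (gseq_pos hA0 L) h4
      simp at h2
      linarith
  · rw [if_pos hh]
    split_ifs <;> norm_num

end TwoChoiceLower

section Bridge

/-- Zip the three coordinate sequences. -/
def zipEquiv (n : ℕ) (A B C : Type*) :
    ((Fin n → A) × (Fin n → B) × (Fin n → C)) ≃ (Fin n → A × B × C) where
  toFun x t := (x.1 t, x.2.1 t, x.2.2 t)
  invFun y := (fun t => (y t).1, fun t => (y t).2.1, fun t => (y t).2.2)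
  left_inv _ := rfl
  right_inv _ := rfl

/-- Candidate sets as a function of the request. -/
noncomputable def cs {m M K : ℕ} (r : ℕ) (ω : Placement m M K) :
    Node m × Fin K → Finset (Node m) := fun ρ => candSet ω ρ.1 ρ.2 r

lemma weightII_eq (m M K r n : ℕ) (x : SampleII m M K n) :
    weightII m M K r n x = (1 / (Fintype.card (Placement m M K) : ℝ)) *
      ∏ t, wt (cs r x.1) (zipEquiv n _ _ _ x.2 t) := by
  unfold weightII wt
  rw [Finset.prod_mul_distrib, Finset.prod_const, Finset.card_univ, Fintype.card_fin, mul_pow,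
    mul_assoc, mul_assoc, mul_assoc, one_div_pow, one_div_pow]
  rfl

lemma sumII (m M K r n : ℕ)
    (F : Placement m M K → (Fin n → (Node m × Fin K) × (Node m × Node m) × Bool) → ℝ) :
    ∑ x : SampleII m M K n, weightII m M K r n x * F x.1 (zipEquiv n _ _ _ x.2) =
      (1 / (Fintype.card (Placement m M K) : ℝ)) *
        ∑ ω, ∑ y, (∏ t, wt (cs r ω) (y t)) * F ω y := by
  rw [Fintype.sum_prod_type, Finset.mul_sum]
  refine Finset.sum_congr rfl fun ω _ => ?_
  rw [← (zipEquiv n _ _ _).sum_comp, Finset.mul_sum]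
  refine Finset.sum_congr rfl fun x _ => ?_
  rw [weightII_eq]
  ring

lemma loads_eq {V R : Type*} [DecidableEq V] {n : ℕ} (cand : Fin n → V × V)
    (tb : Fin n → Bool) (q : Fin n → R) (t : ℕ) (ht : t ≤ n) :
    loadsUpTo cand tb t =
      lload ((List.ofFn fun s => (q s, cand s, tb s)).take t).reverse := by
  induction t with
  | zero => rfl
  | succ t ih =>
    have h : t < n := ht
    funext v
    rw [List.take_add_one]
    simp only [List.getElem?_ofFn, h, dif_pos, Option.toList_some, List.reverse_append,
      List.reverse_singleton, List.singleton_append, lload, loadsUpTo]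
    rw [ih (by omega)]
    rfl

lemma loads_final {V R : Type*} [DecidableEq V] {n : ℕ}
    (x : (Fin n → R) × (Fin n → V × V) × (Fin n → Bool)) :
    loadsUpTo x.2.1 x.2.2 n = lload (List.ofFn (zipEquiv n _ _ _ x)).reverse := by
  rw [loads_eq x.2.1 x.2.2 x.1 n le_rfl]
  rw [List.take_of_length_le (by simp)]
  rfl

lemma probII_eq (m M K r n : ℕ) (P : ℕ → Prop) :
    probII m M K r n {x | P (maxLoadII x.2.2.1 x.2.2.2)} =
      (1 / (Fintype.card (Placement m M K) : ℝ)) *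
        ∑ ω : Placement m M K, EX (wt (cs r ω)) n
          (fun h => if P (Finset.univ.sup (lload h)) then 1 else 0) [] := by
  have := sumII m M K r n (fun ω y =>
    if P (Finset.univ.sup (lload (List.ofFn y).reverse)) then 1 else 0)
  simp only [EX_eq_sum, List.append_nil]
  rw [← this]
  unfold probII
  rw [Finset.sum_filter]
  refine Finset.sum_congr rfl fun x _ => ?_
  rw [← loads_final]
  simp only [Set.mem_setOf_eq, maxLoadII]
  by_cases h : P (Finset.univ.sup (loadsUpTo x.2.2.1 x.2.2.2 n)) <;> simp [h]

lemma chosen_mem {V : Type*} [DecidableEq V] {n : ℕ} (cand : Fin n → V × V)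
    (tb : Fin n → Bool) (t : Fin n) :
    chosenAt cand tb t = (cand t).1 ∨ chosenAt cand tb t = (cand t).2 := by
  unfold chosenAt
  simp only
  split_ifs <;> simp

lemma marginal {X : Type*} [Fintype X] {n : ℕ} (w : X → ℝ) (hw1 : ∑ x, w x = 1) (g : X → ℝ)
    (t : Fin n) : ∑ y : Fin n → X, (∏ s, w (y s)) * g (y t) = ∑ x, w x * g x := by
  have h1 : ∀ y : Fin n → X, (∏ s, w (y s)) * g (y t) =
      ∏ s, (w (y s) * if s = t then g (y s) else 1) := by
    intro y
    rw [Finset.prod_mul_distrib]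
    congr 1
    rw [Finset.prod_ite_eq' Finset.univ t (fun s => g (y s))]
    simp
  simp only [h1]
  rw [← Fintype.piFinset_univ, ← Finset.prod_univ_sum (fun _ => Finset.univ)
    (fun s x => w x * if s = t then g x else 1)]
  rw [Finset.prod_eq_single t]
  · simp
  · intro s _ hs
    simp [hs, hw1]
  · simp

lemma total_mass {X : Type*} [Fintype X] {n : ℕ} (w : X → ℝ) :
    ∑ y : Fin n → X, (∏ s, w (y s)) = (∑ x, w x) ^ n := by
  rw [← Fintype.piFinset_univ, ← Finset.prod_univ_sum (fun _ => Finset.univ)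
    (fun s x => w x)]
  simp

lemma wt_sum_le {V R : Type*} [DecidableEq V] [Fintype V] [Fintype R] (S : R → Finset V) :
    ∑ x, wt S x ≤ 1 := by
  have := sum_wt S (fun _ _ => 1) (fun _ _ => 1) (fun _ => 1)
  simp only [mul_one] at this
  rw [this]
  calc _ ≤ ∑ ρ : R, 1 / (Fintype.card R : ℝ) := by
        refine Finset.sum_le_sum fun ρ _ => ?_
        have h : ((S ρ).card : ℝ) / (S ρ).card ≤ 1 := div_self_le_one _
        have h0 : 0 ≤ ((S ρ).card : ℝ) / (S ρ).card := by positivity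
        simp only [Finset.sum_const, nsmul_eq_mul, mul_one]
        have h1 : (0 : ℝ) ≤ 1 / Fintype.card R := by positivity
        calc _ = 1 / (Fintype.card R : ℝ) * ((((S ρ).card : ℝ) / (S ρ).card) *
              (((S ρ).card : ℝ) / (S ρ).card)) := by ring
          _ ≤ 1 / (Fintype.card R : ℝ) * 1 :=
              mul_le_mul_of_nonneg_left (mul_le_one₀ h h0 h) h1
          _ = _ := mul_one _
    _ ≤ 1 := by
        simp only [Finset.sum_const, nsmul_eq_mul, Finset.card_univ]
        rw [mul_one_div]
        exact div_self_le_one _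

/-- The cost in terms of step sequences. -/
lemma commCostII_eq (m M K r n : ℕ) :
    commCostII m M K r n = (1 / (Fintype.card (Placement m M K) : ℝ)) *
        ∑ ω : Placement m M K, ∑ y : Fin n → (Node m × Fin K) × (Node m × Node m) × Bool,
        (∏ t, wt (cs r ω) (y t)) *
        ((∑ t : Fin n, (torusDist (y t).1.1
          (chosenAt (fun s => (y s).2.1) (fun s => (y s).2.2) t) : ℝ)) / (n : ℝ)) := by
  have := sumII m M K r n (fun ω y => ((∑ t : Fin n, (torusDist (y t).1.1
          (chosenAt (fun s => (y s).2.1) (fun s => (y s).2.2) t) : ℝ)) / (n : ℝ)))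
  rw [← this]
  rfl

lemma commCostII_upper (m M K r n : ℕ) (hn : 0 < n) : commCostII m M K r n ≤ r := by
  rw [commCostII_eq]
  have hn' : (0 : ℝ) < n := by exact_mod_cast hn
  have h1 : ∀ ω : Placement m M K,
      ∑ y : Fin n → (Node m × Fin K) × (Node m × Node m) × Bool,
        (∏ t, wt (cs r ω) (y t)) *
        ((∑ t : Fin n, (torusDist (y t).1.1
          (chosenAt (fun s => (y s).2.1) (fun s => (y s).2.2) t) : ℝ)) / (n : ℝ)) ≤ r := by
    intro ω
    calc _ ≤ ∑ y : Fin n → (Node m × Fin K) × (Node m × Node m) × Bool,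
        (∏ t, wt (cs r ω) (y t)) * r := by
          refine Finset.sum_le_sum fun y _ => ?_
          by_cases h0 : ∏ t, wt (cs r ω) (y t) = 0
          · simp [h0]
          · refine mul_le_mul_of_nonneg_left ?_
              (Finset.prod_nonneg fun t _ => wt_nonneg _ _)
            rw [div_le_iff₀ hn']
            have : ∀ t ∈ (Finset.univ : Finset (Fin n)), (torusDist (y t).1.1
              (chosenAt (fun s => (y s).2.1) (fun s => (y s).2.2) t) : ℝ) ≤ r := by
              intro t _
              have h2 : wt (cs r ω) (y t) ≠ 0 := (Finset.prod_ne_zero_iff.mp h0) t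
                (Finset.mem_univ _)
              have h3 : (y t).2.1.1 ∈ cs r ω (y t).1 ∧ (y t).2.1.2 ∈ cs r ω (y t).1 := by
                by_contra h4
                apply h2
                unfold wt
                rw [if_neg h4, mul_zero]
              have h5 : ∀ v ∈ cs r ω (y t).1, torusDist (y t).1.1 v ≤ r := by
                intro v hv
                unfold cs candSet at hv
                exact (Finset.mem_filter.mp hv).2.2
              rcases chosen_mem (fun s => (y s).2.1) (fun s => (y s).2.2) t with h6 | h6
              · rw [h6]
                exact_mod_cast h5 _ h3.1
              · rw [h6]
                exact_mod_cast h5 _ h3.2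
            refine (Finset.sum_le_card_nsmul _ _ _ this).trans (le_of_eq ?_)
            simp [mul_comm]
      _ = (∑ x, wt (cs r ω) x) ^ n * r := by rw [← Finset.sum_mul, total_mass]
      _ ≤ 1 * r := by
          gcongr
          exact pow_le_one₀ (Finset.sum_nonneg fun x _ => wt_nonneg _ x) (wt_sum_le _)
      _ = r := one_mul _
  have h2 := Finset.sum_le_card_nsmul Finset.univ _ _ (fun ω _ => h1 ω)
  rw [nsmul_eq_mul, Finset.card_univ] at h2
  calc _ ≤ (1 / (Fintype.card (Placement m M K) : ℝ)) *
        ((Fintype.card (Placement m M K) : ℝ) * r) := by gcongr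
    _ = ((Fintype.card (Placement m M K) : ℝ) / (Fintype.card (Placement m M K) : ℝ)) * r := by
        ring
    _ ≤ 1 * r := by
        gcongr
        exact div_self_le_one _
    _ = r := one_mul _

/-- Lower bound on the conditional cost for a fixed placement. -/
lemma cost_lower {m M K : ℕ} [Nonempty (Node m × Fin K)] (r n d : ℕ) (hn : 0 < n)
    (ω : Placement m M K) (hS : ∀ ρ, 0 < (cs r ω ρ).card)
    (hnear : ∑ ρ : Node m × Fin K, (1 / (Fintype.card (Node m × Fin K) : ℝ)) *
      ((∑ v ∈ cs r ω ρ, if torusDist ρ.1 v ≤ d then (1 : ℝ) else 0) / (cs r ω ρ).card) ≤ 1 / 4) :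
    (d : ℝ) / 2 ≤ ∑ y : Fin n → (Node m × Fin K) × (Node m × Node m) × Bool,
        (∏ t, wt (cs r ω) (y t)) *
        ((∑ t : Fin n, (torusDist (y t).1.1
          (chosenAt (fun s => (y s).2.1) (fun s => (y s).2.2) t) : ℝ)) / (n : ℝ)) := by
  have hn' : (0 : ℝ) < n := by exact_mod_cast hn
  let f : (Node m × Fin K) → Node m → ℝ := fun ρ v => if torusDist ρ.1 v ≤ d then 1 else 0
  let g : (Node m × Fin K) × (Node m × Node m) × Bool → ℝ := fun x =>
    d * (1 - f x.1 x.2.1.1 - f x.1 x.2.1.2)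
  have hW := wt_sum (cs r ω) hS
  have hg : (d : ℝ) / 2 ≤ ∑ x, wt (cs r ω) x * g x := by
    have e1 := sum_wt (cs r ω) f (fun _ _ => 1) (fun _ => 1)
    have e2 := sum_wt (cs r ω) (fun _ _ => 1) f (fun _ => 1)
    have hc : ∀ ρ, ((cs r ω ρ).card : ℝ) ≠ 0 := fun ρ => by
      have := hS ρ
      positivity
    simp only [mul_one, one_mul, Finset.sum_const, nsmul_eq_mul] at e1 e2
    have h11 : ((1 : ℝ) + 1) / 2 = 1 := by norm_num
    simp only [div_self (hc _), mul_one, h11] at e1 e2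
    have : ∑ x, wt (cs r ω) x * g x = d * (∑ x, wt (cs r ω) x -
      ∑ x, wt (cs r ω) x * f x.1 x.2.1.1 - ∑ x, wt (cs r ω) x * f x.1 x.2.1.2) := by
      rw [← Finset.sum_sub_distrib, ← Finset.sum_sub_distrib, Finset.mul_sum]
      exact Finset.sum_congr rfl fun x _ => by simp only [g]; ring
    rw [this, hW, e1, e2]
    simp only [f]
    have hd : (0 : ℝ) ≤ d := by positivity
    nlinarith
  calc (d : ℝ) / 2 = (∑ t : Fin n, (d : ℝ) / 2) / n := by
        simp
        field_simp
    _ ≤ (∑ t : Fin n, ∑ y : Fin n → (Node m × Fin K) × (Node m × Node m) × Bool,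
          (∏ s, wt (cs r ω) (y s)) * g (y t)) / n := by
        gcongr with t _
        rw [marginal _ hW]
        exact hg
    _ ≤ (∑ t : Fin n, ∑ y : Fin n → (Node m × Fin K) × (Node m × Node m) × Bool,
          (∏ s, wt (cs r ω) (y s)) * (torusDist (y t).1.1
          (chosenAt (fun s => (y s).2.1) (fun s => (y s).2.2) t) : ℝ)) / n := by
        gcongr with t _ y _
        · exact Finset.prod_nonneg fun t _ => wt_nonneg _ _
        · have h5 : ∀ v, (d : ℝ) * (1 - f (y t).1 v) ≤ torusDist (y t).1.1 v := by
            intro v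
            simp only [f]
            split_ifs with h
            · simp
            · push Not at h
              simp only [sub_zero, mul_one]
              exact_mod_cast h.le
          have hf : ∀ v, (0 : ℝ) ≤ d * f (y t).1 v := fun v => by
            simp only [f]; split_ifs <;> simp
          simp only [g]
          rcases chosen_mem (fun s => (y s).2.1) (fun s => (y s).2.2) t with h6 | h6
          · rw [h6]
            have := h5 (y t).2.1.1
            have := hf (y t).2.1.2
            linarith
          · rw [h6]
            have := h5 (y t).2.1.2
            have := hf (y t).2.1.1
            linarith
    _ = _ := by
        rw [Finset.sum_comm, Finset.sum_div]
        refine Finset.sum_congr rfl fun y _ => ?_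
        rw [← Finset.mul_sum, mul_div_assoc]

end Bridge

section Geometry

/-- Cyclic norm. -/
def nrm {m : ℕ} [NeZero m] (a : Fin m) : ℕ := min a.val (-a).val

lemma cdist_eq {m : ℕ} [NeZero m] (a b : Fin m) : cdist a b = nrm (a - b) := by
  unfold cdist nrm
  rw [neg_sub, Fin.val_sub, Fin.val_sub]
  congr 2 <;> omega

/-- Ball cardinality. -/
noncomputable def bc (m r : ℕ) [NeZero m] : ℕ :=
  (Finset.univ.filter fun w : Node m => nrm w.1 + nrm w.2 ≤ r).card

lemma nrm_neg {m : ℕ} [NeZero m] (a : Fin m) : nrm (-a) = nrm a := by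
  unfold nrm
  rw [neg_neg, min_comm]

lemma torusDist_comm {m : ℕ} [NeZero m] (u v : Node m) : torusDist u v = torusDist v u := by
  unfold torusDist
  rw [cdist_eq, cdist_eq, cdist_eq, cdist_eq, ← nrm_neg, neg_sub, ← nrm_neg (u.2 - v.2), neg_sub]

lemma ball_card {m : ℕ} [NeZero m] (u : Node m) (r : ℕ) :
    (Finset.univ.filter fun v : Node m => torusDist u v ≤ r).card = bc m r := by
  unfold bc
  refine Finset.card_bij (fun v _ => (u.1 - v.1, u.2 - v.2)) ?_ ?_ ?_
  · intro v hv
    simpa [torusDist, cdist_eq] using hv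
  · intro v _ w _ h
    simp only [Prod.mk.injEq, sub_right_inj] at h
    exact Prod.ext h.1 h.2
  · intro w hw
    refine ⟨(u.1 - w.1, u.2 - w.2), ?_, by simp⟩
    simpa [torusDist, cdist_eq] using hw

lemma ball_card' {m : ℕ} [NeZero m] (v : Node m) (r : ℕ) :
    (Finset.univ.filter fun u : Node m => torusDist u v ≤ r).card = bc m r := by
  rw [← ball_card v r]
  congr 1
  ext u
  simp [torusDist_comm]

lemma bc_lower (m r : ℕ) [NeZero m] (hr : r < m) : (r : ℝ) ^ 2 / 4 ≤ bc m r := by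
  have h1 : (r / 2 + 1) * (r / 2 + 1) ≤ bc m r := by
    have : (Finset.univ.filter fun a : Fin m => a.val ≤ r / 2).card = r / 2 + 1 := by
      have h2 : (Finset.univ.filter fun a : Fin m => a.val ≤ r / 2) =
          Finset.Iic (⟨r / 2, by omega⟩ : Fin m) := by
        ext a
        simp [Fin.le_def]
      rw [h2, Fin.card_Iic]
    rw [← this, ← Finset.card_product]
    unfold bc
    apply Finset.card_le_card
    intro w hw
    simp only [Finset.mem_product, Finset.mem_filter, Finset.mem_univ, true_and] at hw ⊢
    have h3 : nrm w.1 ≤ w.1.val := min_le_left _ _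
    have h4 : nrm w.2 ≤ w.2.val := min_le_left _ _
    omega
  have h2 : (r : ℝ) ≤ 2 * ((r / 2 + 1 : ℕ) : ℝ) := by
    exact_mod_cast (by omega : r ≤ 2 * (r / 2 + 1))
  have h3 : ((r / 2 + 1 : ℕ) : ℝ) * ((r / 2 + 1 : ℕ) : ℝ) ≤ bc m r := by exact_mod_cast h1
  have h0 : (0 : ℝ) ≤ r := by positivity
  nlinarith

lemma bc_upper (m d : ℕ) [NeZero m] : (bc m d : ℝ) ≤ (2 * d + 2) ^ 2 := by
  have h0 : (Finset.univ.filter fun a : Fin m => a.val ≤ d).card ≤ d + 1 := by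
    calc _ ≤ (Finset.range (d + 1)).card := by
          refine Finset.card_le_card_of_injOn (fun a => a.val) ?_ ?_
          · intro a ha
            have := (Finset.mem_filter.mp ha).2
            simp
            omega
          · intro a _ b _ h
            exact Fin.ext h
      _ = d + 1 := Finset.card_range _
  have h1 : (Finset.univ.filter fun a : Fin m => (-a).val ≤ d).card ≤ d + 1 := by
    refine le_trans (Finset.card_le_card_of_injOn (fun a => -a) ?_ ?_) h0
    · intro a ha
      simpa using ha
    · intro a _ b _ h
      exact neg_injective h
  have h2 : (Finset.univ.filter fun a : Fin m => nrm a ≤ d).card ≤ 2 * d + 2 := by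
    calc _ ≤ ((Finset.univ.filter fun a : Fin m => a.val ≤ d) ∪
          (Finset.univ.filter fun a : Fin m => (-a).val ≤ d)).card := by
          apply Finset.card_le_card
          intro a ha
          simpa [nrm] using ha
      _ ≤ _ := (Finset.card_union_le _ _).trans (by omega)
  have h3 : bc m d ≤ (2 * d + 2) * (2 * d + 2) := by
    refine le_trans ?_ (Nat.mul_le_mul h2 h2)
    rw [← Finset.card_product]
    unfold bc
    apply Finset.card_le_card
    intro w hw
    simp only [Finset.mem_product, Finset.mem_filter, Finset.mem_univ, true_and] at hw ⊢
    omega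
  rw [sq]
  exact_mod_cast h3

/-- Good placements. -/
def Good {m M K : ℕ} [NeZero m] (r : ℕ) (ω : Placement m M K) : Prop :=
  (∀ u j, (bc m r : ℝ) * M / (8 * K) ≤ (candSet ω u j r).card ∧
    ((candSet ω u j r).card : ℝ) ≤ 3 * (bc m r : ℝ) * M / K) ∧
  ∀ v, (M : ℝ) / 4 ≤ (Finset.univ.filter fun j => cached ω v j).card

lemma files_le {m M K : ℕ} (ω : Placement m M K) (v : Node m) :
    (Finset.univ.filter fun j => cached ω v j).card ≤ M := by
  calc _ ≤ (Finset.univ.image (ω v)).card := by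
        apply Finset.card_le_card
        intro j hj
        obtain ⟨i, hi⟩ := (Finset.mem_filter.mp hj).2
        exact Finset.mem_image.mpr ⟨i, Finset.mem_univ _, hi⟩
    _ ≤ M := Finset.card_image_le.trans (by simp)

lemma card_req {m M K : ℕ} [NeZero m] (r : ℕ) (ω : Placement m M K) (v : Node m) :
    (Finset.univ.filter fun ρ : Node m × Fin K => v ∈ cs r ω ρ).card =
      bc m r * (Finset.univ.filter fun j => cached ω v j).card := by
  rw [← ball_card' v r, ← Finset.card_product]
  congr 1
  ext ρ
  simp [cs, candSet, and_comm]

lemma good_pm {m M K : ℕ} [NeZero m] (hK : 0 < K) (hM : 0 < M) (r : ℕ)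
    (hb : 0 < bc m r) (ω : Placement m M K) (hω : Good r ω) (v : Node m) :
    1 / (12 * ((m ^ 2 : ℕ) : ℝ)) ≤ pm (cs r ω) v ∧ pm (cs r ω) v ≤ 8 / ((m ^ 2 : ℕ) : ℝ) := by
  have hm : 0 < m := Nat.pos_of_ne_zero (NeZero.ne m)
  have hm' : (0 : ℝ) < m := by exact_mod_cast hm
  have hK' : (0 : ℝ) < K := by exact_mod_cast hK
  have hM' : (0 : ℝ) < M := by exact_mod_cast hM
  have hb' : (0 : ℝ) < bc m r := by exact_mod_cast hb
  have hR : (Fintype.card (Node m × Fin K) : ℝ) = m ^ 2 * K := by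
    simp only [Fintype.card_prod, Fintype.card_fin]
    push_cast
    ring
  have hc : ∀ ρ, (0 : ℝ) < (cs r ω ρ).card := fun ρ =>
    lt_of_lt_of_le (by positivity) (hω.1 ρ.1 ρ.2).1
  have hcard := card_req r ω v
  have hcard' : ((Finset.univ.filter fun ρ : Node m × Fin K => v ∈ cs r ω ρ).card : ℝ) =
      bc m r * (Finset.univ.filter fun j => cached ω v j).card := by exact_mod_cast hcard
  have hpm : pm (cs r ω) v = ∑ ρ ∈ Finset.univ.filter (fun ρ : Node m × Fin K => v ∈ cs r ω ρ),
      (1 / (m ^ 2 * K : ℝ)) * (1 / ((cs r ω ρ).card : ℝ)) := by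
    unfold pm
    rw [Finset.sum_filter, hR]
    exact Finset.sum_congr rfl fun ρ _ => by split_ifs <;> simp
  have hT1 := hω.2 v
  have hT2 : ((Finset.univ.filter fun j => cached ω v j).card : ℝ) ≤ M := by
    exact_mod_cast files_le ω v
  rw [hpm]
  push_cast
  constructor
  · have h1 : ∀ ρ ∈ Finset.univ.filter (fun ρ : Node m × Fin K => v ∈ cs r ω ρ),
        (1 / (m ^ 2 * K : ℝ)) * (1 / (3 * (bc m r : ℝ) * M / K)) ≤
        (1 / (m ^ 2 * K : ℝ)) * (1 / ((cs r ω ρ).card : ℝ)) := by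
      intro ρ _
      gcongr
      · exact hc ρ
      · exact (hω.1 ρ.1 ρ.2).2
    refine le_trans ?_ (Finset.card_nsmul_le_sum _ _ _ h1)
    rw [nsmul_eq_mul, hcard']
    calc 1 / (12 * (m : ℝ) ^ 2) = bc m r * (M / 4) *
          ((1 / (m ^ 2 * K : ℝ)) * (1 / (3 * (bc m r : ℝ) * M / K))) := by
          field_simp
          norm_num
      _ ≤ _ := by gcongr
  · have h1 : ∀ ρ ∈ Finset.univ.filter (fun ρ : Node m × Fin K => v ∈ cs r ω ρ),
        (1 / (m ^ 2 * K : ℝ)) * (1 / ((cs r ω ρ).card : ℝ)) ≤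
        (1 / (m ^ 2 * K : ℝ)) * (1 / ((bc m r : ℝ) * M / (8 * K))) := by
      intro ρ _
      gcongr
      exact (hω.1 ρ.1 ρ.2).1
    refine le_trans (Finset.sum_le_card_nsmul _ _ _ h1) ?_
    rw [nsmul_eq_mul, hcard']
    calc _ ≤ bc m r * (M : ℝ) *
          ((1 / (m ^ 2 * K : ℝ)) * (1 / ((bc m r : ℝ) * M / (8 * K)))) := by gcongr
      _ = _ := by
          field_simp

lemma good_near {m M K : ℕ} [NeZero m] (hK : 0 < K) (hM : 0 < M) (r d : ℕ)
    (hb : 0 < bc m r) (hd : 32 * (bc m d : ℝ) ≤ bc m r)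
    (ω : Placement m M K) (hω : Good r ω) :
    ∑ ρ : Node m × Fin K, (1 / (Fintype.card (Node m × Fin K) : ℝ)) *
      ((∑ v ∈ cs r ω ρ, if torusDist ρ.1 v ≤ d then (1 : ℝ) else 0) / (cs r ω ρ).card) ≤
      1 / 4 := by
  have hm : 0 < m := Nat.pos_of_ne_zero (NeZero.ne m)
  have hm' : (0 : ℝ) < m := by exact_mod_cast hm
  have hK' : (0 : ℝ) < K := by exact_mod_cast hK
  have hM' : (0 : ℝ) < M := by exact_mod_cast hM
  have hb' : (0 : ℝ) < bc m r := by exact_mod_cast hb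
  have hR : (Fintype.card (Node m × Fin K) : ℝ) = m ^ 2 * K := by
    simp only [Fintype.card_prod, Fintype.card_fin]
    push_cast
    ring
  have h1 : ∀ ρ : Node m × Fin K,
      (∑ v ∈ cs r ω ρ, if torusDist ρ.1 v ≤ d then (1 : ℝ) else 0) ≤
      ∑ v, if v ∈ cs d ω ρ then (1 : ℝ) else 0 := by
    intro ρ
    rw [Finset.sum_boole, Finset.sum_boole]
    norm_cast
    apply Finset.card_le_card
    intro v hv
    simp [cs, candSet] at hv ⊢
    tauto
  have h2 : ∑ ρ : Node m × Fin K, ∑ v, (if v ∈ cs d ω ρ then (1 : ℝ) else 0) ≤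
      m ^ 2 * (bc m d * M) := by
    rw [Finset.sum_comm]
    have : ∀ v ∈ (Finset.univ : Finset (Node m)), ∑ ρ : Node m × Fin K,
        (if v ∈ cs d ω ρ then (1 : ℝ) else 0) ≤ bc m d * M := by
      intro v _
      rw [Finset.sum_boole, card_req]
      push_cast
      gcongr
      exact_mod_cast files_le ω v
    refine (Finset.sum_le_card_nsmul _ _ _ this).trans (le_of_eq ?_)
    rw [nsmul_eq_mul, Finset.card_univ]
    simp only [Fintype.card_prod, Fintype.card_fin]
    push_cast
    ring
  calc _ ≤ ∑ ρ : Node m × Fin K, (1 / (m ^ 2 * K : ℝ)) *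
      ((∑ v, if v ∈ cs d ω ρ then (1 : ℝ) else 0) / ((bc m r : ℝ) * M / (8 * K))) := by
        rw [hR]
        refine Finset.sum_le_sum fun ρ _ => ?_
        refine mul_le_mul_of_nonneg_left ?_ (by positivity)
        refine div_le_div₀ (Finset.sum_nonneg fun v _ => by split_ifs <;> norm_num) (h1 ρ)
          (by positivity) (hω.1 ρ.1 ρ.2).1
    _ = (1 / (m ^ 2 * K : ℝ)) * ((∑ ρ : Node m × Fin K, ∑ v,
        if v ∈ cs d ω ρ then (1 : ℝ) else 0) / ((bc m r : ℝ) * M / (8 * K))) := by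
        rw [Finset.sum_div, Finset.mul_sum]
    _ ≤ (1 / (m ^ 2 * K : ℝ)) * ((m ^ 2 * (bc m d * M)) / ((bc m r : ℝ) * M / (8 * K))) := by
        gcongr
    _ = 8 * bc m d / bc m r := by
        field_simp
    _ ≤ 1 / 4 := by
        rw [div_le_iff₀ hb']
        linarith

end Geometry

section Conc

lemma pl_prod {V A : Type*} [Fintype V] [DecidableEq V] [Fintype A] (f : V → A → ℝ) :
    ∑ ω : V → A, ∏ v, f v (ω v) = ∏ v, ∑ a, f v a := by
  rw [← Fintype.piFinset_univ, ← Finset.prod_univ_sum (fun _ => Finset.univ) f]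

lemma hit_count {M K : ℕ} (hK : 0 < K) (hMK : M ≤ K) (j : Fin K) :
    (M : ℝ) / (2 * K) * (Fintype.card (Fin M → Fin K) : ℝ) ≤
      ((Finset.univ.filter fun a : Fin M → Fin K => ∃ i, a i = j).card : ℝ) ∧
    ((Finset.univ.filter fun a : Fin M → Fin K => ∃ i, a i = j).card : ℝ) ≤
      (M : ℝ) / K * (Fintype.card (Fin M → Fin K) : ℝ) := by
  have hK' : (0 : ℝ) < K := by exact_mod_cast hK
  have hMK' : (M : ℝ) ≤ K := by exact_mod_cast hMK
  have h1 : ((Finset.univ.filter fun a : Fin M → Fin K => ∃ i, a i = j).card : ℝ) +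
      ((K : ℝ) - 1) ^ M = (Fintype.card (Fin M → Fin K) : ℝ) := by
    have h2 := total_mass (n := M) (fun x : Fin K => if x = j then (0 : ℝ) else 1)
    have h3 : ∑ x : Fin K, (if x = j then (0 : ℝ) else 1) = (K : ℝ) - 1 := by
      have : ∀ x : Fin K, (if x = j then (0 : ℝ) else 1) = 1 - if x = j then 1 else 0 := by
        intro x; split_ifs <;> simp
      simp only [this]
      rw [Finset.sum_sub_distrib]
      simp
    rw [h3] at h2
    rw [← h2, ← Finset.sum_boole, ← Finset.sum_add_distrib]
    have : ∀ y : Fin M → Fin K, ((if ∃ i, y i = j then (1 : ℝ) else 0) +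
        ∏ s, if y s = j then (0 : ℝ) else 1) = 1 := by
      intro y
      by_cases h : ∃ i, y i = j
      · obtain ⟨i, hi⟩ := h
        rw [if_pos ⟨i, hi⟩, Finset.prod_eq_zero (Finset.mem_univ i) (by simp [hi])]
        simp
      · rw [if_neg h, Finset.prod_eq_one]
        · simp
        · intro s _
          rw [if_neg]
          exact fun hs => h ⟨s, hs⟩
    simp only [this]
    simp
  have hN : (Fintype.card (Fin M → Fin K) : ℝ) = (K : ℝ) ^ M := by simp
  rw [hN] at h1 ⊢
  have hx0 : (0 : ℝ) ≤ M / K := by positivity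
  have hx1 : (M : ℝ) / K ≤ 1 := by rw [div_le_one hK']; exact hMK'
  have hK1 : (1 : ℝ) ≤ K := by exact_mod_cast hK
  have hinv : (K : ℝ)⁻¹ ≤ 1 := inv_le_one_of_one_le₀ hK1
  have h4 : ((K : ℝ) - 1) ^ M = (1 - 1 / K) ^ M * K ^ M := by
    rw [← mul_pow]; congr 1; field_simp
  have h5 : 1 - (M : ℝ) / K ≤ (1 - 1 / K) ^ M := by
    have := one_add_mul_le_pow (a := -(1 / (K : ℝ))) (by rw [one_div]; linarith) M
    calc _ = 1 + (M : ℝ) * -(1 / (K : ℝ)) := by ring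
      _ ≤ _ := this
      _ = _ := by ring
  have h6 : (1 - 1 / (K : ℝ)) ^ M ≤ 1 - (M : ℝ) / (2 * K) := by
    have h7 : (1 - 1 / (K : ℝ)) ^ M ≤ Real.exp (-(M / K : ℝ)) := by
      calc (1 - 1 / (K : ℝ)) ^ M ≤ (Real.exp (-(1 / K : ℝ))) ^ M := by
            apply pow_le_pow_left₀
            · rw [one_div]; linarith
            · have := Real.add_one_le_exp (-(1 / K : ℝ)); linarith
        _ = _ := by rw [← Real.exp_nat_mul]; congr 1; ring
    refine h7.trans ?_
    rw [Real.exp_neg]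
    have h8 := Real.add_one_le_exp (M / K : ℝ)
    have h9 : (Real.exp (M / K : ℝ))⁻¹ ≤ (M / K + 1 : ℝ)⁻¹ := by gcongr
    refine h9.trans ?_
    rw [inv_le_iff_one_le_mul₀ (by positivity)]
    have : (M : ℝ) / (2 * K) = (M / K : ℝ) / 2 := by field_simp
    rw [this]
    nlinarith
  have hP : (0 : ℝ) < (K : ℝ) ^ M := by positivity
  rw [h4] at h1
  constructor <;> nlinarith

lemma mgf_pl {m M K : ℕ} (hK : 0 < K) (B : Finset (Node m)) (j : Fin K) (y : ℝ)
    (hy : 0 ≤ y) (c : ℝ)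
    (hc : (y - 1) * ((Finset.univ.filter fun a : Fin M → Fin K => ∃ i, a i = j).card : ℝ) ≤
      c * (Fintype.card (Fin M → Fin K) : ℝ)) :
    ∑ ω : Placement m M K, y ^ (B.filter fun v => cached ω v j).card ≤
      (Fintype.card (Placement m M K) : ℝ) * Real.exp (c * B.card) := by
  have h1 : ∀ ω : Placement m M K, y ^ (B.filter fun v => cached ω v j).card =
      ∏ v, (if v ∈ B then (if ∃ i, ω v i = j then y else 1) else 1) := by
    intro ω
    rw [Finset.prod_ite_mem, Finset.univ_inter, Finset.prod_ite]
    simp only [Finset.prod_const, Finset.prod_const_one, mul_one, one_pow]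
    congr 2
    ext v
    rw [Finset.mem_filter, Finset.mem_filter]
    exact Iff.rfl
  simp only [h1]
  rw [pl_prod (fun (v : Node m) (a : Fin M → Fin K) => if v ∈ B then (if ∃ i, a i = j then y else 1) else 1)]
  have h2 : ∀ v, ∑ a : Fin M → Fin K, (if v ∈ B then (if ∃ i, a i = j then y else 1) else 1) ≤
      (Fintype.card (Fin M → Fin K) : ℝ) * (if v ∈ B then Real.exp c else 1) := by
    intro v
    by_cases hv : v ∈ B
    · simp only [hv, if_true]
      have : ∀ a : Fin M → Fin K, (if ∃ i, a i = j then y else 1) =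
          1 + (y - 1) * if ∃ i, a i = j then 1 else 0 := by
        intro a; split_ifs <;> ring
      simp only [this]
      rw [Finset.sum_add_distrib, ← Finset.mul_sum, Finset.sum_boole]
      have h3 : ∑ a : Fin M → Fin K, (1 : ℝ) = Fintype.card (Fin M → Fin K) := by simp
      rw [h3]
      have := Real.add_one_le_exp c
      have h0 : (0 : ℝ) ≤ Fintype.card (Fin M → Fin K) := by positivity
      nlinarith
    · simp [hv]
  calc _ ≤ ∏ v, ((Fintype.card (Fin M → Fin K) : ℝ) * (if v ∈ B then Real.exp c else 1)) := by
        refine Finset.prod_le_prod (fun v _ => Finset.sum_nonneg fun a _ => ?_) fun v _ => h2 v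
        split_ifs <;> first | exact hy | norm_num
    _ = _ := by
        rw [Finset.prod_mul_distrib, Finset.prod_ite_mem, Finset.univ_inter, Finset.prod_const,
          Finset.prod_const, ← Real.exp_nat_mul, Finset.card_univ, mul_comm c]
        congr 1
        rw [Fintype.card_fun (α := Node m)]
        push_cast
        rfl

lemma cand_lower {m M K : ℕ} [NeZero m] (hK : 0 < K) (hMK : M ≤ K) (r : ℕ) (u : Node m)
    (j : Fin K) :
    ((Finset.univ.filter fun ω : Placement m M K =>
      ¬ ((bc m r : ℝ) * M / (8 * K) ≤ (candSet ω u j r).card)).card : ℝ) ≤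
      (Fintype.card (Placement m M K) : ℝ) * Real.exp (-((bc m r : ℝ) * M / (8 * K))) := by
  have hq := (hit_count hK hMK j).1
  set B := Finset.univ.filter fun v : Node m => torusDist u v ≤ r with hB
  have hBc : B.card = bc m r := ball_card u r
  have hcs : ∀ ω : Placement m M K, candSet ω u j r = B.filter fun v => cached ω v j := by
    intro ω
    ext v
    simp [candSet, hB, and_comm]
  have he : Real.exp (-1) - 1 ≤ -(1 / 2) := by
    have : Real.exp (-1) ≤ 1 / 2 := by
      rw [Real.exp_neg, one_div]
      gcongr
      linarith [Real.add_one_le_exp 1]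
    linarith
  have h1 := mgf_pl (M := M) hK B j (Real.exp (-1)) (Real.exp_nonneg _) (-(M / (4 * K)))
    (by
      have h0 : (0 : ℝ) ≤ ((Finset.univ.filter fun a : Fin M → Fin K => ∃ i, a i = j).card : ℝ) :=
        by positivity
      have : (M : ℝ) / (4 * K) = M / (2 * K) / 2 := by field_simp; norm_num
      rw [this]
      nlinarith)
  set t := (bc m r : ℝ) * M / (8 * K) with ht
  have h2 : ((Finset.univ.filter fun ω : Placement m M K =>
      ¬ (t ≤ (candSet ω u j r).card)).card : ℝ) * Real.exp (-t) ≤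
      ∑ ω : Placement m M K, Real.exp (-1) ^ (B.filter fun v => cached ω v j).card := by
    rw [← Finset.sum_boole, Finset.sum_mul]
    refine Finset.sum_le_sum fun ω _ => ?_
    split_ifs with h
    · rw [zero_mul]; positivity
    · rw [← hcs, ← Real.exp_nat_mul, one_mul, Real.exp_le_exp]
      push Not at h
      linarith
  have h3 := h2.trans h1
  rw [hBc] at h3
  have h4 : Real.exp (-(M / (4 * K) : ℝ) * bc m r) = Real.exp (-t) * Real.exp (-t) := by
    rw [← Real.exp_add]
    congr 1
    rw [ht]
    field_simp
    ring
  rw [h4, ← mul_assoc] at h3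
  exact le_of_mul_le_mul_right h3 (Real.exp_pos _)

lemma cand_upper {m M K : ℕ} [NeZero m] (hK : 0 < K) (hMK : M ≤ K) (r : ℕ) (u : Node m)
    (j : Fin K) :
    ((Finset.univ.filter fun ω : Placement m M K =>
      ¬ (((candSet ω u j r).card : ℝ) ≤ 3 * (bc m r : ℝ) * M / K)).card : ℝ) ≤
      (Fintype.card (Placement m M K) : ℝ) * Real.exp (-((bc m r : ℝ) * M / (8 * K))) := by
  have hK' : (0 : ℝ) < K := by exact_mod_cast hK
  have hq := (hit_count hK hMK j).2
  set B := Finset.univ.filter fun v : Node m => torusDist u v ≤ r with hB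
  have hBc : B.card = bc m r := ball_card u r
  have hcs : ∀ ω : Placement m M K, candSet ω u j r = B.filter fun v => cached ω v j := by
    intro ω
    ext v
    simp [candSet, hB, and_comm]
  have he : Real.exp 1 - 1 ≤ 2 := by
    linarith [Real.exp_one_lt_d9]
  have h1 := mgf_pl (M := M) hK B j (Real.exp 1) (Real.exp_nonneg _) (2 * (M / K))
    (by
      have h0 : (0 : ℝ) ≤ ((Finset.univ.filter fun a : Fin M → Fin K => ∃ i, a i = j).card : ℝ) :=
        by positivity
      nlinarith)
  set t := 3 * (bc m r : ℝ) * M / K with ht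
  have h2 : ((Finset.univ.filter fun ω : Placement m M K =>
      ¬ (((candSet ω u j r).card : ℝ) ≤ t)).card : ℝ) * Real.exp t ≤
      ∑ ω : Placement m M K, Real.exp 1 ^ (B.filter fun v => cached ω v j).card := by
    rw [← Finset.sum_boole, Finset.sum_mul]
    refine Finset.sum_le_sum fun ω _ => ?_
    split_ifs with h
    · rw [zero_mul]; positivity
    · rw [← hcs, ← Real.exp_nat_mul, one_mul, Real.exp_le_exp]
      push Not at h
      linarith
  have h3 := h2.trans h1
  rw [hBc] at h3
  have h4 : Real.exp (2 * (M / K : ℝ) * bc m r) ≤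
      Real.exp (-((bc m r : ℝ) * M / (8 * K))) * Real.exp t := by
    rw [← Real.exp_add, Real.exp_le_exp, ht]
    have h5 : (0 : ℝ) ≤ bc m r * M / K := by positivity
    have h6 : (bc m r : ℝ) * M / (8 * K) = bc m r * M / K / 8 := by field_simp
    have h7 : 2 * (M / K : ℝ) * bc m r = 2 * (bc m r * M / K) := by ring
    have h8 : 3 * (bc m r : ℝ) * M / K = 3 * (bc m r * M / K) := by ring
    rw [h6, h7, h8]
    linarith
  have h5 : ((Finset.univ.filter fun ω : Placement m M K =>
      ¬ (((candSet ω u j r).card : ℝ) ≤ t)).card : ℝ) * Real.exp t ≤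
      ((Fintype.card (Placement m M K) : ℝ) * Real.exp (-((bc m r : ℝ) * M / (8 * K)))) *
        Real.exp t := by
    rw [mul_assoc]
    exact h3.trans (mul_le_mul_of_nonneg_left h4 (by positivity))
  exact le_of_mul_le_mul_right h5 (Real.exp_pos _)

lemma distinct_files {M K : ℕ} (hK : 0 < K) (hMK : M ≤ K) :
    ((Finset.univ.filter fun a : Fin M → Fin K =>
      ¬ ((M : ℝ) / 4 ≤ (Finset.univ.filter fun j => ∃ i, a i = j).card)).card : ℝ) ≤
      (Fintype.card (Fin M → Fin K) : ℝ) * Real.exp (-(M / 8 : ℝ)) := by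
  have hK' : (0 : ℝ) < K := by exact_mod_cast hK
  have hMK' : (M : ℝ) ≤ K := by exact_mod_cast hMK
  have h1 := EX_lower (X := Fin K) (fun _ => 1 / (K : ℝ)) (fun _ => by positivity)
    (by simp; field_simp) (fun _ => True) (fun h => h.toFinset.card) (3 / 4) (M / 4)
    (fun _ _ _ => trivial)
    (fun h x => by
      apply Finset.card_le_card
      intro y hy
      simp at hy ⊢
      exact Or.inr hy)
    (fun h _ hlt => by
      rw [← Finset.mul_sum]
      have h2 : ((Finset.univ \ h.toFinset : Finset (Fin K)).card : ℝ) ≤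
          ∑ x : Fin K, (if h.toFinset.card < (x :: h).toFinset.card then (1 : ℝ) else 0) := by
        rw [Finset.sum_boole]
        norm_cast
        apply Finset.card_le_card
        intro x hx
        simp only [Finset.mem_sdiff, Finset.mem_univ, true_and, Finset.mem_filter] at hx ⊢
        rw [List.toFinset_cons, Finset.card_insert_of_notMem hx]
        omega
      have h3 : ((Finset.univ \ h.toFinset : Finset (Fin K)).card : ℝ) = K - h.toFinset.card := by
        rw [Finset.card_sdiff_of_subset (Finset.subset_univ _), Nat.cast_sub
          (Finset.card_le_card (Finset.subset_univ _))]
        simp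
      have h4 : (3 / 4 : ℝ) * K ≤ ∑ x : Fin K,
          (if h.toFinset.card < (x :: h).toFinset.card then (1 : ℝ) else 0) := by linarith
      calc (3 / 4 : ℝ) = 1 / K * (3 / 4 * K) := by field_simp
        _ ≤ _ := by gcongr)
    M [] trivial
  rw [EX_eq_sum] at h1
  have h5 : ∀ a : Fin M → Fin K, ((List.ofFn a).reverse ++ []).toFinset =
      Finset.univ.filter fun j => ∃ i, a i = j := by
    intro a
    ext j
    simp [List.mem_ofFn]
  simp only [h5] at h1
  rw [← Finset.sum_boole]
  have hN : (Fintype.card (Fin M → Fin K) : ℝ) = (K : ℝ) ^ M := by simp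
  rw [hN]
  have h6 : ∏ t : Fin M, (1 / (K : ℝ)) = 1 / (K : ℝ) ^ M := by simp
  simp only [h6, ← Finset.mul_sum] at h1
  have hP : (0 : ℝ) < (K : ℝ) ^ M := by positivity
  simp only [not_le]
  rw [one_div, inv_mul_le_iff₀ hP] at h1
  refine h1.trans (le_of_eq ?_)
  congr 2
  ring

lemma files_lower {m M K : ℕ} [NeZero m] (hK : 0 < K) (hMK : M ≤ K) (v : Node m) :
    ((Finset.univ.filter fun ω : Placement m M K =>
      ¬ ((M : ℝ) / 4 ≤ (Finset.univ.filter fun j => cached ω v j).card)).card : ℝ) ≤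
      (Fintype.card (Placement m M K) : ℝ) * Real.exp (-(M / 8 : ℝ)) := by
  have h0 := distinct_files hK hMK
  rw [← Finset.sum_boole] at h0 ⊢
  have h1 : ∀ ω : Placement m M K,
      (if ¬ ((M : ℝ) / 4 ≤ (Finset.univ.filter fun j => cached ω v j).card) then (1 : ℝ) else 0) =
      ∏ s, (if s = v then (if ¬ ((M : ℝ) / 4 ≤ (Finset.univ.filter fun j => ∃ i, ω s i = j).card)
        then (1 : ℝ) else 0) else 1) := by
    intro ω
    rw [Finset.prod_ite_eq' Finset.univ v (fun s => if ¬ ((M : ℝ) / 4 ≤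
      (Finset.univ.filter fun j => ∃ i, ω s i = j).card) then (1 : ℝ) else 0)]
    rw [if_pos (Finset.mem_univ v)]
    unfold cached
    congr
  rw [Finset.sum_congr rfl fun ω _ => h1 ω]
  rw [pl_prod (fun (s : Node m) (a : Fin M → Fin K) => (if s = v then (if ¬ ((M : ℝ) / 4 ≤
    (Finset.univ.filter fun j => ∃ i, a i = j).card) then (1 : ℝ) else 0) else 1))]
  calc _ ≤ ∏ s : Node m, ((Fintype.card (Fin M → Fin K) : ℝ) *
        if s = v then Real.exp (-(M / 8 : ℝ)) else 1) := by
        refine Finset.prod_le_prod (fun s _ => Finset.sum_nonneg fun a _ => ?_) fun s _ => ?_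
        · split_ifs <;> norm_num
        · by_cases hs : s = v
          · simp only [hs, if_true]
            exact h0
          · simp [hs]
    _ = _ := by
        rw [Finset.prod_mul_distrib, Finset.prod_ite_eq' Finset.univ v
          (fun s => Real.exp (-(M / 8 : ℝ))), Finset.prod_const, Finset.card_univ]
        rw [Fintype.card_fun (α := Node m)]
        push_cast
        simp

lemma good_prob {m M K : ℕ} [NeZero m] (hK : 0 < K) (hMK : M ≤ K) (r : ℕ) :
    ((Finset.univ.filter fun ω : Placement m M K => ¬ Good r ω).card : ℝ) ≤
      (Fintype.card (Placement m M K) : ℝ) *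
        (2 * m ^ 2 * K * Real.exp (-((bc m r : ℝ) * M / (8 * K))) +
          m ^ 2 * Real.exp (-(M / 8 : ℝ))) := by
  set N := (Fintype.card (Placement m M K) : ℝ) with hN
  set e1 := Real.exp (-((bc m r : ℝ) * M / (8 * K)))
  set e2 := Real.exp (-(M / 8 : ℝ))
  have hsub : (Finset.univ.filter fun ω : Placement m M K => ¬ Good r ω) ⊆
      (Finset.univ.biUnion fun ρ : Node m × Fin K =>
        (Finset.univ.filter fun ω : Placement m M K =>
          ¬ ((bc m r : ℝ) * M / (8 * K) ≤ (candSet ω ρ.1 ρ.2 r).card)) ∪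
        (Finset.univ.filter fun ω : Placement m M K =>
          ¬ (((candSet ω ρ.1 ρ.2 r).card : ℝ) ≤ 3 * (bc m r : ℝ) * M / K))) ∪
      (Finset.univ.biUnion fun v : Node m => Finset.univ.filter fun ω : Placement m M K =>
        ¬ ((M : ℝ) / 4 ≤ (Finset.univ.filter fun j => cached ω v j).card)) := by
    intro ω hω
    have h := (Finset.mem_filter.mp hω).2
    unfold Good at h
    rw [not_and_or] at h
    rw [Finset.mem_union, Finset.mem_biUnion, Finset.mem_biUnion]
    rcases h with h | h
    · left
      rw [not_forall] at h
      obtain ⟨u, h⟩ := h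
      rw [not_forall] at h
      obtain ⟨j, h⟩ := h
      rw [not_and_or] at h
      refine ⟨(u, j), Finset.mem_univ _, ?_⟩
      rw [Finset.mem_union, Finset.mem_filter, Finset.mem_filter]
      exact h.imp (fun h => ⟨Finset.mem_univ _, h⟩) (fun h => ⟨Finset.mem_univ _, h⟩)
    · right
      rw [not_forall] at h
      obtain ⟨v, h⟩ := h
      exact ⟨v, Finset.mem_univ _, Finset.mem_filter.mpr ⟨Finset.mem_univ _, h⟩⟩
  have h1 := (Finset.card_le_card hsub).trans (Finset.card_union_le _ _)
  have h2 := h1.trans (add_le_add Finset.card_biUnion_le Finset.card_biUnion_le)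
  have h3 := (Nat.cast_le (α := ℝ)).mpr h2
  refine h3.trans ?_
  push_cast
  have hA : ∀ ρ ∈ (Finset.univ : Finset (Node m × Fin K)),
      ((((Finset.univ.filter fun ω : Placement m M K =>
          ¬ ((bc m r : ℝ) * M / (8 * K) ≤ (candSet ω ρ.1 ρ.2 r).card)) ∪
        (Finset.univ.filter fun ω : Placement m M K =>
          ¬ (((candSet ω ρ.1 ρ.2 r).card : ℝ) ≤ 3 * (bc m r : ℝ) * M / K))).card : ℕ) : ℝ) ≤
      N * e1 + N * e1 := by
    intro ρ _
    refine (Nat.cast_le.mpr (Finset.card_union_le _ _)).trans ?_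
    push_cast
    exact add_le_add (cand_lower hK hMK r ρ.1 ρ.2) (cand_upper hK hMK r ρ.1 ρ.2)
  have hA' := Finset.sum_le_card_nsmul _ _ _ hA
  have hB' := Finset.sum_le_card_nsmul _ _ _ (fun v (_ : v ∈ (Finset.univ : Finset (Node m))) =>
    files_lower hK hMK v)
  refine (add_le_add hA' hB').trans (le_of_eq ?_)
  rw [nsmul_eq_mul, nsmul_eq_mul, Finset.card_univ, Finset.card_univ]
  simp only [Fintype.card_prod, Fintype.card_fin]
  push_cast
  ring

end Conc

section Finite

/-- Failure probability of the placement. -/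
noncomputable def badP (m M K r : ℕ) [NeZero m] : ℝ :=
  2 * m ^ 2 * K * Real.exp (-((bc m r : ℝ) * M / (8 * K))) + m ^ 2 * Real.exp (-(M / 8 : ℝ))

lemma pl_nonempty {m M K : ℕ} (hK : 0 < K) : (0 : ℝ) < Fintype.card (Placement m M K) := by
  haveI : Nonempty (Fin K) := ⟨⟨0, hK⟩⟩
  exact_mod_cast Fintype.card_pos

lemma avg_good {m M K : ℕ} [NeZero m] (hK : 0 < K) (hMK : M ≤ K) (r : ℕ)
    (f : Placement m M K → ℝ) (c d : ℝ) (hd : 0 ≤ d)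
    (hf : ∀ ω, Good r ω → c ≤ f ω) (hf' : ∀ ω, c - d ≤ f ω) :
    c - d * badP m M K r ≤ (1 / (Fintype.card (Placement m M K) : ℝ)) * ∑ ω, f ω := by
  have hN := pl_nonempty (m := m) (M := M) hK
  have h1 : ∀ ω : Placement m M K, c - d * (if ¬ Good r ω then 1 else 0) ≤ f ω := by
    intro ω
    by_cases h : Good r ω
    · simp [h, hf ω h]
    · simpa [h] using hf' ω
  have h2 := Finset.sum_le_sum fun ω (_ : ω ∈ (Finset.univ : Finset (Placement m M K))) => h1 ω
  rw [Finset.sum_sub_distrib, ← Finset.mul_sum, Finset.sum_boole, Finset.sum_const,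
    Finset.card_univ, nsmul_eq_mul] at h2
  have h3 := good_prob hK hMK (m := m) r
  rw [one_div, ← div_eq_inv_mul, le_div_iff₀ hN]
  have h4 := mul_le_mul_of_nonneg_left h3 hd
  unfold badP
  calc _ = (Fintype.card (Placement m M K) : ℝ) * c - d * ((Fintype.card (Placement m M K) : ℝ) *
        (2 * m ^ 2 * K * Real.exp (-((bc m r : ℝ) * M / (8 * K))) +
          m ^ 2 * Real.exp (-(M / 8 : ℝ)))) := by ring
    _ ≤ _ := by linarith

lemma finite_prob {m M K : ℕ} [NeZero m] (hK : 0 < K) (hM : 0 < M) (hMK : M ≤ K) (r : ℕ)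
    (hb : 0 < bc m r) (s0 : ℝ) (hs0 : 0 ≤ s0) (hs : s0 ≤ (bc m r : ℝ) * M / (8 * K))
    (J k L : ℕ) (θ : ℝ) (hθ : 0 ≤ θ)
    (hL : 0 < L) (hLn : L ≤ m ^ 2) :
    1 - badP m M K r - (((J : ℝ) + 1) * (m ^ 2 * K * Real.exp (-(bseq J ^ 2 * s0))) +
        m ^ 2 * Real.exp (Real.exp θ * (16 * bseq J) - θ * k)) -
      L * (m ^ 2 * K * Real.exp (-(gseq (384 * L) L * s0))) ≤
    probII m M K r (m ^ 2) {x | L ≤ maxLoadII x.2.2.1 x.2.2.2 ∧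
      maxLoadII x.2.2.1 x.2.2.2 < 8192 + J + k} := by
  have hm : 0 < m := Nat.pos_of_ne_zero (NeZero.ne m)
  have hn : 0 < m ^ 2 := by positivity
  haveI : Nonempty (Node m × Fin K) := ⟨((⟨0, hm⟩, ⟨0, hm⟩), ⟨0, hK⟩)⟩
  haveI : Nonempty (Node m) := ⟨(⟨0, hm⟩, ⟨0, hm⟩)⟩
  have hK' : (0 : ℝ) < K := by exact_mod_cast hK
  have hM' : (0 : ℝ) < M := by exact_mod_cast hM
  have hb' : (0 : ℝ) < bc m r := by exact_mod_cast hb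
  have hR : (Fintype.card (Node m × Fin K) : ℝ) = m ^ 2 * K := by
    simp only [Fintype.card_prod, Fintype.card_fin]
    push_cast
    ring
  have hV : (Fintype.card (Node m) : ℝ) = m ^ 2 := by
    simp only [Fintype.card_prod, Fintype.card_fin]
    push_cast
    ring
  rw [probII_eq m M K r (m ^ 2) (fun z => L ≤ z ∧ z < 8192 + J + k)]
  set e1 := (((J : ℝ) + 1) * (m ^ 2 * K * Real.exp (-(bseq J ^ 2 * s0))) +
        m ^ 2 * Real.exp (Real.exp θ * (16 * bseq J) - θ * k)) with he1
  set e2 := L * (m ^ 2 * K * Real.exp (-(gseq (384 * L) L * s0))) with he2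
  have he1' : 0 ≤ e1 := by positivity
  have he2' : 0 ≤ e2 := by positivity
  have key := avg_good hK hMK r (fun ω : Placement m M K => EX (wt (cs r ω)) (m ^ 2)
    (fun h => if (L ≤ Finset.univ.sup (lload h) ∧ Finset.univ.sup (lload h) < 8192 + J + k)
      then (1 : ℝ) else 0) []) (1 - e1 - e2) 1 (by norm_num) ?_ ?_
  · have hl : 1 - badP m M K r - e1 - e2 = 1 - e1 - e2 - 1 * badP m M K r := by ring
    rw [hl]
    refine key.trans (le_of_eq ?_)
    congr!
  · intro ω hω
    have hS : ∀ ρ, 0 < (cs r ω ρ).card := by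
      intro ρ
      have : (0 : ℝ) < (cs r ω ρ).card := lt_of_lt_of_le (by positivity) (hω.1 ρ.1 ρ.2).1
      exact_mod_cast this
    have hcard : ∀ ρ, s0 ≤ (cs r ω ρ).card := fun ρ => hs.trans (hω.1 ρ.1 ρ.2).1
    have hu := upper_main (cs r ω) hS (m ^ 2) hn (fun v => (good_pm hK hM r hb ω hω v).2) s0 hs0
      hcard J k θ hθ
    have hl := lower_main (cs r ω) hS (m ^ 2) hn (fun v => (good_pm hK hM r hb ω hω v).1) s0 hs0
      hcard L hL hLn
    rw [hR, hV] at hu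
    rw [hR] at hl
    have hc := EX_const _ (wt_sum (cs r ω) hS) 1 (m ^ 2) []
    have h1 : EX (wt (cs r ω)) (m ^ 2) (fun _ => (1 : ℝ)) [] ≤
        EX (wt (cs r ω)) (m ^ 2) (fun h =>
          (if (L ≤ Finset.univ.sup (lload h) ∧ Finset.univ.sup (lload h) < 8192 + J + k)
            then (1 : ℝ) else 0) + ((if ∃ v, 8192 + J + k ≤ lload h v then 1 else 0) +
            (if ∀ v, lload h v < L then 1 else 0))) [] := by
      apply EX_mono _ (wt_nonneg _)
      intro h
      by_cases hA : ∃ v, 8192 + J + k ≤ lload h v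
      · rw [if_pos hA]
        split_ifs <;> norm_num
      · by_cases hB : ∀ v, lload h v < L
        · rw [if_pos hB]
          split_ifs <;> norm_num
        · rw [if_pos]
          · split_ifs <;> norm_num
          · push Not at hA hB
            obtain ⟨v, hv⟩ := hB
            refine ⟨hv.trans (Finset.le_sup (f := lload h) (Finset.mem_univ v)), ?_⟩
            rw [Finset.sup_lt_iff (by simp only [Nat.bot_eq_zero]; omega)]
            exact fun v _ => hA v
    rw [hc, EX_add, EX_add] at h1
    linarith
  · intro ω
    have : EX (wt (cs r ω)) (m ^ 2) (fun _ => (0 : ℝ)) [] ≤ EX (wt (cs r ω)) (m ^ 2)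
        (fun h => if (L ≤ Finset.univ.sup (lload h) ∧ Finset.univ.sup (lload h) < 8192 + J + k)
      then (1 : ℝ) else 0) [] := by
      apply EX_mono _ (wt_nonneg _)
      intro h
      split_ifs <;> norm_num
    have h0 : EX (wt (cs r ω)) (m ^ 2) (fun _ => (0 : ℝ)) [] = 0 := by
      have := EX_smul (wt (cs r ω)) 0 (fun _ => 0) (m ^ 2) []
      simpa using this
    rw [h0] at this
    linarith

lemma finite_cost {m M K : ℕ} [NeZero m] (hK : 0 < K) (hM : 0 < M) (hMK : M ≤ K) (r d : ℕ)
    (hb : 0 < bc m r) (hd : 32 * (bc m d : ℝ) ≤ bc m r) :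
    (d : ℝ) / 2 - (d : ℝ) / 2 * badP m M K r ≤ commCostII m M K r (m ^ 2) := by
  have hm : 0 < m := Nat.pos_of_ne_zero (NeZero.ne m)
  have hn : 0 < m ^ 2 := by positivity
  haveI : Nonempty (Node m × Fin K) := ⟨((⟨0, hm⟩, ⟨0, hm⟩), ⟨0, hK⟩)⟩
  have hK' : (0 : ℝ) < K := by exact_mod_cast hK
  have hM' : (0 : ℝ) < M := by exact_mod_cast hM
  have hb' : (0 : ℝ) < bc m r := by exact_mod_cast hb
  rw [commCostII_eq]
  refine avg_good hK hMK r _ _ _ (by positivity) ?_ ?_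
  · intro ω hω
    have hS : ∀ ρ, 0 < (cs r ω ρ).card := by
      intro ρ
      have : (0 : ℝ) < (cs r ω ρ).card := lt_of_lt_of_le (by positivity) (hω.1 ρ.1 ρ.2).1
      exact_mod_cast this
    exact cost_lower r (m ^ 2) d hn ω hS (good_near hK hM r d hb hd ω hω)
  · intro ω
    rw [sub_self]
    refine Finset.sum_nonneg fun y _ => mul_nonneg
      (Finset.prod_nonneg fun t _ => wt_nonneg _ _) (by positivity)

end Finite

section Asymp

lemma weightII_nonneg (m M K r n : ℕ) (x : SampleII m M K n) : 0 ≤ weightII m M K r n x := by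
  unfold weightII
  refine mul_nonneg (by positivity) (Finset.prod_nonneg fun t _ => ?_)
  split_ifs <;> positivity

lemma probII_mono (m M K r n : ℕ) {E F : Set (SampleII m M K n)} (h : E ⊆ F) :
    probII m M K r n E ≤ probII m M K r n F := by
  unfold probII
  refine Finset.sum_le_sum_of_subset_of_nonneg ?_ fun x _ _ => weightII_nonneg _ _ _ _ _ x
  intro x hx
  simp only [Finset.mem_filter, Finset.mem_univ, true_and] at hx ⊢
  exact h hx

lemma ev_exp (a C : ℝ) (ha : 0 < a) (hC : 0 < C) :
    ∀ᶠ x : ℝ in atTop, Real.exp (-(x ^ a * C)) ≤ 1 / x ^ 5 := by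
  have h1 := (isLittleO_log_rpow_atTop ha).bound (show (0 : ℝ) < C / 5 by positivity)
  filter_upwards [h1, eventually_ge_atTop 1] with x hx h1x
  have hx0 : 0 < x := by linarith
  rw [Real.norm_of_nonneg (Real.log_nonneg h1x), Real.norm_of_nonneg (by positivity)] at hx
  have : 1 / x ^ 5 = Real.exp (-(5 * Real.log x)) := by
    rw [Real.exp_neg, show (5 : ℝ) * Real.log x = ((5 : ℕ) : ℝ) * Real.log x by norm_num,
      Real.exp_nat_mul, Real.exp_log hx0, one_div]
  rw [this, Real.exp_le_exp]
  linarith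

lemma ev_rpow (a b : ℝ) (hab : a < b) (hb : 0 < b) : ∀ᶠ x : ℝ in atTop, x ^ a + 1 < x ^ b := by
  have h1 := (tendsto_rpow_atTop (sub_pos.mpr hab)).eventually_ge_atTop 4
  have h2 := (tendsto_rpow_atTop hb).eventually_ge_atTop 4
  filter_upwards [h1, h2, eventually_ge_atTop 1] with x hx h2x h1x
  have hx0 : 0 < x := by linarith
  have h3 : x ^ b = x ^ a * x ^ (b - a) := by
    rw [← Real.rpow_add hx0]
    congr 1
    ring
  have h4 : x ^ a * 4 ≤ x ^ b := by
    rw [h3]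
    gcongr
  linarith

lemma upper_num (δ x : ℝ) (hδ : 0 < δ) (hδ1 : δ < 1) (hx : 8 ≤ x)
    (hy : 1 + 18432 / δ ≤ Real.log (Real.log x))
    (hE : Real.exp (-(x ^ (δ / 2) * (1 / 131072))) ≤ 1 / x ^ 5) (k : ℕ) (hk : 24 / δ ≤ k) :
    ∃ J : ℕ, (J : ℝ) ≤ 2 * Real.log (Real.log x) ∧ ∃ θ : ℝ, 0 ≤ θ ∧
      ((J : ℝ) + 1) * (x * x * Real.exp (-(bseq J ^ 2 * (x ^ δ / 32)))) +
        x * Real.exp (Real.exp θ * (16 * bseq J) - θ * k) ≤ 4 / x ^ 2 := by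
  have hx0 : 0 < x := by linarith
  set l := Real.log x with hl
  set y := Real.log l with hyd
  have hy1 : 1 ≤ y := by
    have : 0 < 18432 / δ := by positivity
    linarith
  have hlog0 : 0 < Real.log x := by
    exact Real.log_pos (by linarith)
  have hley : y + 1 ≤ l := by
    have := Real.add_one_le_exp y
    rwa [hyd, Real.exp_log hlog0] at this
  have hlx : l + 1 ≤ x := by
    have := Real.add_one_le_exp l
    rwa [hl, Real.exp_log hx0] at this
  have hl2 : 0 < Real.log 2 := Real.log_pos (by norm_num)
  have hl2a : (1 : ℝ) / 2 ≤ Real.log 2 := by linarith [Real.log_two_gt_d9]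
  have hl2b : Real.log 2 ≤ 1 := by linarith [Real.log_two_lt_d9]
  have hl4 : 4 ≤ δ * l := by
    have h1 : 18432 / δ ≤ l := by linarith
    rw [div_le_iff₀ hδ] at h1
    linarith
  have h1 : 1 ≤ δ / 4 * l / Real.log 2 := by
    rw [le_div_iff₀ hl2]
    linarith
  obtain ⟨J, hJ1, hJ2⟩ := exists_nat_pow_near h1 (show (1 : ℝ) < 2 by norm_num)
  have hJa : (2 : ℝ) ^ J * Real.log 2 ≤ δ / 4 * l := by
    rwa [le_div_iff₀ hl2] at hJ1
  have hJb : δ / 8 * l ≤ (2 : ℝ) ^ J * Real.log 2 := by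
    rw [div_lt_iff₀ hl2, pow_succ] at hJ2
    linarith
  have hb : bseq J = (1 / 64) * Real.exp (-((2 : ℝ) ^ J * Real.log 2)) := by
    unfold bseq
    congr 1
    have : (1 / 2 : ℝ) = Real.exp (-Real.log 2) := by
      rw [Real.exp_neg, Real.exp_log (by norm_num)]
      norm_num
    rw [this, ← Real.exp_nat_mul]
    congr 1
    push_cast
    ring
  have hJl : (2 : ℝ) ^ J ≤ l := by
    have h3 : (0 : ℝ) < 2 ^ J := by positivity
    nlinarith
  have hJx : (J : ℝ) + 1 ≤ x := by
    have h3 : J + 1 ≤ 2 ^ J := Nat.lt_two_pow_self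
    have h4 : (J : ℝ) + 1 ≤ 2 ^ J := by exact_mod_cast h3
    linarith
  refine ⟨J, ?_, δ / 8 * l, by positivity, ?_⟩
  · have h3 := Real.log_le_log (by positivity) hJl
    rw [Real.log_pow] at h3
    have h4 : (0 : ℝ) ≤ J := by positivity
    nlinarith
  · have hA : x ^ (δ / 2) * (1 / 131072) ≤ bseq J ^ 2 * (x ^ δ / 32) := by
      have h5 : (1 / 64) * Real.exp (-(δ / 4 * l)) ≤ bseq J := by
        rw [hb]
        gcongr
      have h6 : ((1 / 64) * Real.exp (-(δ / 4 * l))) ^ 2 ≤ bseq J ^ 2 := by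
        gcongr
      have h7 : x ^ (δ / 2) * (1 / 131072) =
          ((1 / 64) * Real.exp (-(δ / 4 * l))) ^ 2 * (x ^ δ / 32) := by
        rw [Real.rpow_def_of_pos hx0, Real.rpow_def_of_pos hx0, mul_pow, ← Real.exp_nat_mul]
        have : Real.exp (Real.log x * (δ / 2)) =
            Real.exp (((2 : ℕ) : ℝ) * -(δ / 4 * l)) * Real.exp (Real.log x * δ) := by
          rw [← Real.exp_add]
          congr 1
          push_cast
          rw [hl]
          ring
        rw [this]
        ring
      rw [h7]
      gcongr
    have hB : Real.exp (-(bseq J ^ 2 * (x ^ δ / 32))) ≤ 1 / x ^ 5 :=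
      (Real.exp_le_exp.mpr (neg_le_neg hA)).trans hE
    have hC : Real.exp (Real.exp (δ / 8 * l) * (16 * bseq J) - δ / 8 * l * k) ≤ 3 / x ^ 3 := by
      have h5 : bseq J ≤ (1 / 64) * Real.exp (-(δ / 8 * l)) := by
        rw [hb]
        gcongr
      have h6 : Real.exp (δ / 8 * l) * (16 * bseq J) ≤ 1 := by
        calc _ ≤ Real.exp (δ / 8 * l) * (16 * ((1 / 64) * Real.exp (-(δ / 8 * l)))) := by gcongr
          _ = (1 / 4) * (Real.exp (δ / 8 * l) * Real.exp (-(δ / 8 * l))) := by ring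
          _ = 1 / 4 := by rw [← Real.exp_add]; simp
          _ ≤ 1 := by norm_num
      have h7 : 3 * l ≤ δ / 8 * l * k := by
        rw [div_le_iff₀ hδ] at hk
        have : 0 < l := by linarith
        nlinarith
      calc _ ≤ Real.exp (1 - ((3 : ℕ) : ℝ) * l) := by
            rw [Real.exp_le_exp]
            push_cast
            linarith
        _ = Real.exp 1 / x ^ 3 := by
            rw [Real.exp_sub, Real.exp_nat_mul, hl, Real.exp_log hx0]
        _ ≤ 3 / x ^ 3 := by
            gcongr
            linarith [Real.exp_one_lt_d9]
    calc _ ≤ x * (x * x * (1 / x ^ 5)) + x * (3 / x ^ 3) := by gcongr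
      _ = 4 / x ^ 2 := by
          field_simp
          norm_num

lemma lower_num (δ x : ℝ) (hδ : 0 < δ) (hδ1 : δ < 1) (hx : 8 ≤ x)
    (hy : 1 + 18432 / δ ≤ Real.log (Real.log x))
    (hE : Real.exp (-(x ^ (δ / 2) * (1 / 131072))) ≤ 1 / x ^ 5) :
    ∃ L : ℕ, 0 < L ∧ (L : ℝ) ≤ x ∧ (1 / 2) * Real.log (Real.log x) ≤ L ∧
      L * (x * x * Real.exp (-(gseq (384 * L) L * (x ^ δ / 32)))) ≤ 1 / x ^ 2 := by
  have hx0 : 0 < x := by linarith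
  set l := Real.log x with hl
  set y := Real.log l with hyd
  have hdl : 18432 ≤ 18432 / δ := by
    rw [le_div_iff₀ hδ]
    linarith
  have hlog0 : 0 < Real.log x := by
    exact Real.log_pos (by linarith)
  have hely : Real.exp y = l := by rw [hyd, Real.exp_log hlog0]
  have hley : y + 1 ≤ l := by
    have := Real.add_one_le_exp y
    linarith
  have hlx : l + 1 ≤ x := by
    have := Real.add_one_le_exp l
    rwa [hl, Real.exp_log hx0] at this
  set L := ⌊y / 2⌋₊ + 1 with hL
  have hLa : y / 2 ≤ L := by
    rw [hL]; push_cast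
    exact (Nat.lt_floor_add_one _).le
  have hLb : (L : ℝ) ≤ y / 2 + 1 := by
    rw [hL]; push_cast
    have := Nat.floor_le (show 0 ≤ y / 2 by linarith)
    linarith
  have hL1 : (1 : ℝ) ≤ L := by
    rw [hL]; push_cast
    have : (0 : ℝ) ≤ ⌊y / 2⌋₊ := by positivity
    linarith
  refine ⟨L, by omega, by linarith, by linarith, ?_⟩
  have hLx : (L : ℝ) ≤ x := by linarith
  have hg : Real.exp (-(δ / 2 * l)) ≤ gseq (384 * L) L := by
    unfold gseq
    have hA : (1 : ℝ) ≤ 384 * L := by linarith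
    have hA0 : (0 : ℝ) < 384 * L := by linarith
    have h1 : (1 / (384 * L : ℝ)) ^ (2 ^ L) = Real.exp (-(2 ^ L * Real.log (384 * L))) := by
      have : (1 / (384 * L : ℝ)) = Real.exp (-Real.log (384 * L)) := by
        rw [Real.exp_neg, Real.exp_log hA0, one_div]
      rw [this, ← Real.exp_nat_mul]
      congr 1
      push_cast
      ring
    have h2 : (2 : ℝ) ^ L ≤ 3 * Real.exp (y / 2) := by
      calc (2 : ℝ) ^ L ≤ (Real.exp 1) ^ L := by
            gcongr
            linarith [Real.add_one_le_exp 1]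
        _ = Real.exp L := by rw [← Real.exp_nat_mul, mul_one]
        _ ≤ Real.exp (y / 2 + 1) := Real.exp_le_exp.mpr hLb
        _ = Real.exp 1 * Real.exp (y / 2) := by rw [Real.exp_add, mul_comm]
        _ ≤ _ := by
            gcongr
            linarith [Real.exp_one_lt_d9]
    have h3 : Real.log (384 * L) ≤ 384 * (y / 2 + 1) := by
      have := Real.log_le_sub_one_of_pos hA0
      linarith
    have h4 : 3 * (384 * (y / 2 + 1)) ≤ δ / 2 * Real.exp (y / 2) := by
      have h5 := Real.quadratic_le_exp_of_nonneg (show 0 ≤ y / 2 by linarith)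
      have h6 : 18432 ≤ δ * y := by
        have : 18432 / δ ≤ y := by linarith
        rw [div_le_iff₀ hδ] at this
        linarith
      have h7 : δ / 2 * ((y / 2) ^ 2 / 2) ≤ δ / 2 * Real.exp (y / 2) := by
        gcongr
        linarith
      nlinarith
    have h5 : 2 ^ L * Real.log (384 * L) ≤ δ / 2 * l := by
      calc _ ≤ 3 * Real.exp (y / 2) * (384 * (y / 2 + 1)) := by
            gcongr
            exact Real.log_nonneg hA
        _ = Real.exp (y / 2) * (3 * (384 * (y / 2 + 1))) := by ring
        _ ≤ Real.exp (y / 2) * (δ / 2 * Real.exp (y / 2)) := by gcongr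
        _ = δ / 2 * (Real.exp (y / 2) * Real.exp (y / 2)) := by ring
        _ = δ / 2 * l := by rw [← Real.exp_add, add_halves, hely]
    calc _ ≤ Real.exp (-(2 ^ L * Real.log (384 * L))) := by gcongr
      _ = 1 * (1 / (384 * L : ℝ)) ^ (2 ^ L) := by rw [h1, one_mul]
      _ ≤ _ := by gcongr
  have hA : x ^ (δ / 2) * (1 / 131072) ≤ gseq (384 * L) L * (x ^ δ / 32) := by
    have h7 : x ^ (δ / 2) * (1 / 32) = Real.exp (-(δ / 2 * l)) * (x ^ δ / 32) := by
      rw [Real.rpow_def_of_pos hx0, Real.rpow_def_of_pos hx0]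
      have : Real.exp (Real.log x * (δ / 2)) =
          Real.exp (-(δ / 2 * l)) * Real.exp (Real.log x * δ) := by
        rw [← Real.exp_add]
        congr 1
        rw [hl]
        ring
      rw [this]
      ring
    calc _ ≤ x ^ (δ / 2) * (1 / 32) := by gcongr; norm_num
      _ = _ := h7
      _ ≤ _ := by gcongr
  have hB : Real.exp (-(gseq (384 * L) L * (x ^ δ / 32))) ≤ 1 / x ^ 5 :=
    (Real.exp_le_exp.mpr (neg_le_neg hA)).trans hE
  calc _ ≤ x * (x * x * (1 / x ^ 5)) := by gcongr
    _ = 1 / x ^ 2 := by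
        field_simp

lemma delta_pos (γ : ℝ) (hcond : ∃ N₀ : ℕ, ∀ n : ℕ, N₀ ≤ n →
      1 + 2 * Real.log (Real.log (n : ℝ)) / Real.log (n : ℝ) ≤ γ) : 1 < γ := by
  obtain ⟨N₀, h⟩ := hcond
  have h1 := h (max N₀ 3) (le_max_left _ _)
  set n := max N₀ 3
  have hn : (3 : ℝ) ≤ n := by exact_mod_cast le_max_right N₀ 3
  have h2 : 1 < Real.log n := by
    rw [Real.lt_log_iff_exp_lt (by linarith)]
    linarith [Real.exp_one_lt_d9]
  have h3 : 0 < Real.log (Real.log n) := Real.log_pos h2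
  have : 0 < 2 * Real.log (Real.log (n : ℝ)) / Real.log (n : ℝ) := by positivity
  linarith

set_option maxHeartbeats 1000000 in
/-- The main quantitative claim, for one large grid. -/
lemma main_step (α β : ℝ) (hα0 : 0 < α) (hβ0 : 0 < β) (hδ : 0 < α + 2 * β - 1)
    (hδ1 : α + 2 * β - 1 < 1) (k m : ℕ) (hk : 24 / (α + 2 * β - 1) ≤ k)
    (x : ℝ) (hxm : x = ((m ^ 2 : ℕ) : ℝ)) (hx : 8 ≤ x)
    (h1 : x ^ α + 1 < x) (h2 : x ^ β + 1 < x ^ (1 / 2 : ℝ)) (h3 : 96 ≤ x ^ β)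
    (hE : Real.exp (-(x ^ ((α + 2 * β - 1) / 2) * (1 / 131072))) ≤ 1 / x ^ 5)
    (hE' : Real.exp (-(x ^ α * (1 / 8))) ≤ 1 / x ^ 5)
    (hy : 1 + 18432 / (α + 2 * β - 1) ≤ Real.log (Real.log x))
    (hyk : 8192 + (k : ℝ) ≤ Real.log (Real.log x)) :
    (1 - x ^ (-1 : ℝ) ≤
          probII m (Mf α (m ^ 2)) (m ^ 2) (rf β (m ^ 2)) (m ^ 2)
            {z | 1 / 2 * Real.log (Real.log x) ≤ (maxLoadII z.2.2.1 z.2.2.2 : ℝ) ∧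
                (maxLoadII z.2.2.1 z.2.2.2 : ℝ) ≤ 3 * Real.log (Real.log x)}) ∧
        1 / 384 * x ^ β ≤ commCostII m (Mf α (m ^ 2)) (m ^ 2) (rf β (m ^ 2)) (m ^ 2) ∧
        commCostII m (Mf α (m ^ 2)) (m ^ 2) (rf β (m ^ 2)) (m ^ 2) ≤ 2 * x ^ β := by
  set δ := α + 2 * β - 1 with hδd
  have hx0 : 0 < x := by linarith
  have hm0 : 0 < m := by
    rcases Nat.eq_zero_or_pos m with h | h
    · rw [h] at hxm
      norm_num at hxm
      linarith
    · exact h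
  haveI : NeZero m := ⟨hm0.ne'⟩
  have hxm2 : x = (m : ℝ) ^ 2 := by rw [hxm]; push_cast; ring
  have hsq : x ^ (1 / 2 : ℝ) = m := by
    rw [← Real.sqrt_eq_rpow, hxm2, Real.sqrt_sq (by positivity)]
  set M := Mf α (m ^ 2) with hM
  set r := rf β (m ^ 2) with hr
  have hM1 : x ^ α ≤ M := by rw [hM, Mf, ← hxm]; exact Nat.le_ceil _
  have hM2 : (M : ℝ) ≤ x := by
    rw [hM, Mf, ← hxm]
    exact (Nat.ceil_lt_add_one (by positivity)).le.trans h1.le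
  have hr1 : x ^ β ≤ r := by rw [hr, rf, ← hxm]; exact Nat.le_ceil _
  have hr2 : (r : ℝ) ≤ x ^ β + 1 := by
    rw [hr, rf, ← hxm]
    exact (Nat.ceil_lt_add_one (by positivity)).le
  have hK : 0 < m ^ 2 := by positivity
  have hMK : M ≤ m ^ 2 := by rw [hxm] at hM2; exact_mod_cast hM2
  have hM0 : 0 < M := by
    have : (0 : ℝ) < M := lt_of_lt_of_le (by positivity) hM1
    exact_mod_cast this
  have hrm : r < m := by
    have : (r : ℝ) < m := by rw [← hsq]; linarith
    exact_mod_cast this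
  have hr96 : (96 : ℝ) ≤ r := h3.trans hr1
  have hbc := bc_lower m r hrm
  have hb : 0 < bc m r := by
    have : (0 : ℝ) < bc m r := lt_of_lt_of_le (by positivity) hbc
    exact_mod_cast this
  have hs : x ^ δ / 32 ≤ (bc m r : ℝ) * M / (8 * ((m ^ 2 : ℕ) : ℝ)) := by
    rw [← hxm]
    have h4 : x ^ δ / 32 = ((x ^ β) ^ 2 / 4) * x ^ α / (8 * x) := by
      have : x ^ δ = (x ^ β) ^ 2 * x ^ α / x := by
        rw [hδd, Real.rpow_sub hx0, Real.rpow_add hx0, Real.rpow_one, two_mul,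
          Real.rpow_add hx0]
        ring
      rw [this]
      field_simp
      norm_num
    rw [h4]
    have h5 : (x ^ β) ^ 2 / 4 ≤ bc m r := by
      refine le_trans ?_ hbc
      gcongr
    gcongr
  have hbad : badP m M (m ^ 2) r ≤ 3 / x ^ 2 := by
    unfold badP
    rw [← hxm, ← hxm2]
    rw [← hxm] at hs
    have h6 : Real.exp (-((bc m r : ℝ) * M / (8 * x))) ≤ 1 / x ^ 5 := by
      refine le_trans (Real.exp_le_exp.mpr (neg_le_neg ?_)) hE
      refine le_trans ?_ hs
      have : x ^ (δ / 2) ≤ x ^ δ :=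
        Real.rpow_le_rpow_of_exponent_le (by linarith) (by linarith)
      have h0 : 0 ≤ x ^ δ := by positivity
      linarith
    have h7 : Real.exp (-(M / 8 : ℝ)) ≤ 1 / x ^ 5 := by
      refine le_trans (Real.exp_le_exp.mpr (neg_le_neg ?_)) hE'
      linarith
    calc _ ≤ 2 * x * x * (1 / x ^ 5) + x * (1 / x ^ 5) := by gcongr
      _ = (2 / x + 1 / x ^ 2) * (1 / x ^ 2) := by field_simp
      _ ≤ 3 * (1 / x ^ 2) := by
          gcongr
          have h8 : 2 / x ≤ 1 := by rw [div_le_one hx0]; linarith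
          have h9 : 1 / x ^ 2 ≤ 1 := by rw [div_le_one (by positivity)]; nlinarith
          linarith
      _ = _ := by ring
  have hx2 : 8 / x ^ 2 ≤ x ^ (-1 : ℝ) := by
    rw [Real.rpow_neg_one, div_le_iff₀ (by positivity), sq, inv_mul_cancel_left₀ hx0.ne']
    exact hx
  refine ⟨?_, ?_, ?_⟩
  · obtain ⟨J, hJ, θ, hθ, hu⟩ := upper_num δ x hδ hδ1 hx hy hE k hk
    obtain ⟨L, hL0, hLx, hLy, hl⟩ := lower_num δ x hδ hδ1 hx hy hE
    have hLn : L ≤ m ^ 2 := by rw [hxm] at hLx; exact_mod_cast hLx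
    have hf := finite_prob hK hM0 hMK r hb (x ^ δ / 32) (by positivity) hs J k L θ hθ hL0 hLn
    rw [← hxm, ← hxm2] at hf
    have hmono := probII_mono m M (m ^ 2) r (m ^ 2)
      (E := {z | L ≤ maxLoadII z.2.2.1 z.2.2.2 ∧ maxLoadII z.2.2.1 z.2.2.2 < 8192 + J + k})
      (F := {z | 1 / 2 * Real.log (Real.log x) ≤ (maxLoadII z.2.2.1 z.2.2.2 : ℝ) ∧
                (maxLoadII z.2.2.1 z.2.2.2 : ℝ) ≤ 3 * Real.log (Real.log x)}) (by
        rintro z ⟨hz1, hz2⟩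
        have hz1' : (L : ℝ) ≤ maxLoadII z.2.2.1 z.2.2.2 := by exact_mod_cast hz1
        have hz2' : (maxLoadII z.2.2.1 z.2.2.2 : ℝ) ≤ 8192 + J + k := by exact_mod_cast hz2.le
        exact ⟨by linarith, by linarith⟩)
    refine le_trans ?_ (hf.trans hmono)
    have : 3 / x ^ 2 + 4 / x ^ 2 + 1 / x ^ 2 = 8 / x ^ 2 := by ring
    linarith
  · have hd1 : ((r / 48 : ℕ) : ℝ) ≤ (r : ℝ) / 48 := by
      have := Nat.cast_div_le (α := ℝ) (m := r) (n := 48)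
      exact_mod_cast this
    have hd2 : (r : ℝ) / 48 ≤ ((r / 48 : ℕ) : ℝ) + 1 := by
      have : r ≤ 48 * (r / 48 + 1) := by omega
      have h' : (r : ℝ) ≤ 48 * (((r / 48 : ℕ) : ℝ) + 1) := by exact_mod_cast this
      linarith
    have hd : 32 * (bc m (r / 48) : ℝ) ≤ bc m r := by
      have h4 := bc_upper m (r / 48)
      have h5 : 2 * ((r / 48 : ℕ) : ℝ) + 2 ≤ r / 12 := by linarith
      have h6 : (2 * ((r / 48 : ℕ) : ℝ) + 2) ^ 2 ≤ (r / 12 : ℝ) ^ 2 := by gcongr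
      have h7 : (r / 12 : ℝ) ^ 2 = (r : ℝ) ^ 2 / 144 := by ring
      have h8 : (0 : ℝ) ≤ (r : ℝ) ^ 2 := by positivity
      linarith
    have hc := finite_cost hK hM0 hMK r (r / 48) hb hd
    have h7 : badP m M (m ^ 2) r ≤ 1 / 2 := by
      refine hbad.trans ?_
      rw [div_le_iff₀ (by positivity)]
      have : 8 ^ 2 ≤ x ^ 2 := by gcongr
      linarith
    have h8 : (0 : ℝ) ≤ ((r / 48 : ℕ) : ℝ) / 2 := by positivity
    have h9 := mul_le_mul_of_nonneg_left h7 h8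
    linarith
  · have := commCostII_upper m M (m ^ 2) r (m ^ 2) hK
    linarith

end Asymp

/-- Let `0 < α, β < 1/2` be constants, `K = n`, `M = ⌈n^α⌉`,
`r = ⌈n^β⌉`, and assume `α + 2β ≥ 1 + 2·log log n/log n` for all sufficiently large
`n`.  Under the Uniform popularity distribution, Strategy II with radius `r` achieves
maximum load `Θ(log log n)` with high probability, and its communication cost is
`Θ(r) = Θ(n^β)`. -/
theorem statement6 (α β : ℝ) (hα0 : 0 < α) (hα1 : α < 1 / 2) (hβ0 : 0 < β)
    (hβ1 : β < 1 / 2)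
    (hcond : ∃ N₀ : ℕ, ∀ n : ℕ, N₀ ≤ n →
      1 + 2 * Real.log (Real.log (n : ℝ)) / Real.log (n : ℝ) ≤ α + 2 * β) :
    ∃ c₁ c₂ c₃ c₄ c : ℝ, 0 < c₁ ∧ 0 < c₂ ∧ 0 < c₃ ∧ 0 < c₄ ∧ 0 < c ∧
      ∃ N : ℕ, ∀ m : ℕ, N ≤ m →
        (1 - (((m ^ 2 : ℕ) : ℝ)) ^ (-c) ≤
          probII m (Mf α (m ^ 2)) (m ^ 2) (rf β (m ^ 2)) (m ^ 2)
            {x | c₁ * Real.log (Real.log ((m ^ 2 : ℕ) : ℝ)) ≤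
                  (maxLoadII x.2.2.1 x.2.2.2 : ℝ) ∧
                (maxLoadII x.2.2.1 x.2.2.2 : ℝ) ≤
                  c₂ * Real.log (Real.log ((m ^ 2 : ℕ) : ℝ))}) ∧
        c₃ * (((m ^ 2 : ℕ) : ℝ)) ^ β ≤
            commCostII m (Mf α (m ^ 2)) (m ^ 2) (rf β (m ^ 2)) (m ^ 2) ∧
        commCostII m (Mf α (m ^ 2)) (m ^ 2) (rf β (m ^ 2)) (m ^ 2) ≤
            c₄ * (((m ^ 2 : ℕ) : ℝ)) ^ β := by
  have hδ : 0 < α + 2 * β - 1 := by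
    have := delta_pos (α + 2 * β) hcond
    linarith
  refine ⟨1 / 2, 3, 1 / 384, 2, 1, by norm_num, by norm_num, by norm_num, by norm_num,
    by norm_num, ?_⟩
  obtain ⟨k, hk⟩ := exists_nat_ge (24 / (α + 2 * β - 1))
  have hll : Tendsto (fun x : ℝ => Real.log (Real.log x)) atTop atTop :=
    Real.tendsto_log_atTop.comp Real.tendsto_log_atTop
  have hmain : ∀ᶠ x : ℝ in atTop, ∀ m : ℕ, x = ((m ^ 2 : ℕ) : ℝ) →
      (1 - x ^ (-1 : ℝ) ≤
          probII m (Mf α (m ^ 2)) (m ^ 2) (rf β (m ^ 2)) (m ^ 2)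
            {z | 1 / 2 * Real.log (Real.log x) ≤ (maxLoadII z.2.2.1 z.2.2.2 : ℝ) ∧
                (maxLoadII z.2.2.1 z.2.2.2 : ℝ) ≤ 3 * Real.log (Real.log x)}) ∧
        1 / 384 * x ^ β ≤ commCostII m (Mf α (m ^ 2)) (m ^ 2) (rf β (m ^ 2)) (m ^ 2) ∧
        commCostII m (Mf α (m ^ 2)) (m ^ 2) (rf β (m ^ 2)) (m ^ 2) ≤ 2 * x ^ β := by
    filter_upwards [eventually_ge_atTop 8, ev_rpow α 1 (by linarith) (by norm_num),
      ev_rpow β (1 / 2) hβ1 (by norm_num), (tendsto_rpow_atTop hβ0).eventually_ge_atTop 96,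
      ev_exp ((α + 2 * β - 1) / 2) (1 / 131072) (by linarith) (by norm_num),
      ev_exp α (1 / 8) hα0 (by norm_num),
      hll.eventually_ge_atTop (1 + 18432 / (α + 2 * β - 1)),
      hll.eventually_ge_atTop (8192 + (k : ℝ))] with x a1 a2 a3 a4 a5 a6 a7 a8 m hxm
    rw [Real.rpow_one] at a2
    exact main_step α β hα0 hβ0 hδ (by linarith) k m hk x hxm a1 a2 a3 a4 a5 a6 a7 a8
  have htend : Tendsto (fun m : ℕ => ((m ^ 2 : ℕ) : ℝ)) atTop atTop :=
    tendsto_natCast_atTop_atTop.comp (tendsto_pow_atTop two_ne_zero)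
  obtain ⟨N, hN⟩ := eventually_atTop.mp (htend.eventually hmain)
  exact ⟨N, fun m hm => hN m hm m rfl⟩
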